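/- arXiv:1606.08582 — 7 statements merged into one kernel-verified Lean document; each statement's English description precedes it below -/
import Mathlib

section
/- For every α ∈ [0,1], the set K_α equals Σ_α ∪ ⋃_{(w,(i,j)) ∈ W_* × B} e_{ij}^w, where Σ_α is the unique nonempty compact subset of ℝ² satisfying Σ_α = G₁(Σ_α) ∪ G₂(Σ_α) ∪ G₃(Σ_α), and K_α is the unique compact set with K_α = G₁(K_α) ∪ G₂(K_α) ∪ G₃(K_α) ∪ e₁₂ ∪ e₂₃ ∪ e₃₁. -/
/-!
Each `G i` contracts distances by the factor `c = (1 - α) / 2 < 1`, so `G_w` contracts by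
`c ^ |w|`. Hence a point that, for every `n`, has the form `G_w y` with `|w| = n` and `y` in a fixed
compact set `A` must lie in every nonempty closed bounded set `B` stable under the `G i`: it is
within `c ^ n * const` of `G_w b ∈ B` (`mem_of_forall_word`).

With `A = Sg`, `B = K` this gives `Sg ⊆ K`, and the edges `G_w(e_{ij})` lie in `K` because `K` is
stable and contains the `e_{ij}`. With `A = K`, `B = Sg` it gives the other inclusion: unfolding the
equation of `K` exactly `n` times, a point of `K` is either in some edge `G_w(e_{ij})` with `|w| < n`
or in `G_w(K)` with `|w| = n`; a point outside all the edges is thus in `G_w(K)` for words `w` of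
every length, so it lies in `Sg`.
-/

theorem exists_mem_eq_iff {X : Type*} {G : Fin 3 → X → X} {A : Set X} {x : X} :
    (∃ i, ∃ y ∈ A, x = G i y) ↔ x ∈ G 0 '' A ∪ G 1 '' A ∪ G 2 '' A := by
  constructor
  · rintro ⟨i, y, hy, rfl⟩
    match i with
    | 0 => exact Or.inl (Or.inl ⟨y, hy, rfl⟩)
    | 1 => exact Or.inl (Or.inr ⟨y, hy, rfl⟩)
    | 2 => exact Or.inr ⟨y, hy, rfl⟩
  · rintro ((⟨y, hy, rfl⟩ | ⟨y, hy, rfl⟩) | ⟨y, hy, rfl⟩) <;> exact ⟨_, y, hy, rfl⟩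

section Words

variable {X ι : Type*} {G : ι → X → X} {Gw : List ι → X → X}

theorem word_mem (hcons : ∀ i w x, Gw (i :: w) x = G i (Gw w x))
    (hnil : ∀ x, Gw [] x = x) {B : Set X} (hB : ∀ i, ∀ x ∈ B, G i x ∈ B) (w : List ι) :
    ∀ x ∈ B, Gw w x ∈ B := by
  induction w with
  | nil => intro x hx; rwa [hnil]
  | cons i w ih => intro x hx; rw [hcons]; exact hB i _ (ih x hx)

/-- Iterating `A ⊆ E ∪ ⋃ i, G i '' A` exactly `n` times. -/
theorem exists_word_of_length (hcons : ∀ i w x, Gw (i :: w) x = G i (Gw w x))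
    (hnil : ∀ x, Gw [] x = x) {A E : Set X}
    (hA : ∀ x ∈ A, x ∈ E ∨ ∃ i, ∃ y ∈ A, x = G i y) (n : ℕ) :
    ∀ x ∈ A, (∃ w, x ∈ Gw w '' E) ∨ ∃ w : List ι, w.length = n ∧ ∃ y ∈ A, x = Gw w y := by
  induction n with
  | zero => intro x hx; exact Or.inr ⟨[], rfl, x, hx, (hnil x).symm⟩
  | succ n ih =>
    intro x hx
    rcases hA x hx with hxE | ⟨i, y, hy, rfl⟩
    · exact Or.inl ⟨[], x, hxE, hnil x⟩
    · rcases ih y hy with ⟨w, z, hz, rfl⟩ | ⟨w, hw, z, hz, rfl⟩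
      · exact Or.inl ⟨i :: w, z, hz, hcons i w z⟩
      · exact Or.inr ⟨i :: w, by simp [hw], z, hz, (hcons i w z).symm⟩

theorem dist_word_le [PseudoMetricSpace X] (hcons : ∀ i w x, Gw (i :: w) x = G i (Gw w x))
    (hnil : ∀ x, Gw [] x = x) {c : ℝ} (hc : 0 ≤ c)
    (hG : ∀ i x y, dist (G i x) (G i y) ≤ c * dist x y) (w : List ι) (x y : X) :
    dist (Gw w x) (Gw w y) ≤ c ^ w.length * dist x y := by
  induction w with
  | nil => simp [hnil]
  | cons i w ih =>
    rw [hcons, hcons, List.length_cons, pow_succ']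
    calc _ ≤ c * dist (Gw w x) (Gw w y) := hG ..
      _ ≤ c * (c ^ w.length * dist x y) := by gcongr
      _ = _ := by ring

theorem mem_of_forall_word [PseudoMetricSpace X] (hcons : ∀ i w x, Gw (i :: w) x = G i (Gw w x))
    (hnil : ∀ x, Gw [] x = x) {c : ℝ} (hc : 0 ≤ c) (hc1 : c < 1)
    (hG : ∀ i x y, dist (G i x) (G i y) ≤ c * dist x y) {A B : Set X}
    (hA : Bornology.IsBounded A) (hBne : B.Nonempty) (hBc : IsClosed B)
    (hB : ∀ i, ∀ x ∈ B, G i x ∈ B) {x : X}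
    (hx : ∀ n : ℕ, ∃ w : List ι, w.length = n ∧ ∃ y ∈ A, x = Gw w y) : x ∈ B := by
  obtain ⟨b, hb⟩ := hBne
  obtain ⟨r, hr⟩ := hA.subset_closedBall b
  rw [← hBc.closure_eq, Metric.mem_closure_iff]
  intro ε hε
  have hlim : Filter.Tendsto (fun n : ℕ => c ^ n * r) Filter.atTop (nhds 0) := by
    simpa using (tendsto_pow_atTop_nhds_zero_of_lt_one hc hc1).mul_const r
  obtain ⟨n, hn⟩ := (hlim.eventually_lt_const hε).exists
  obtain ⟨w, rfl, y, hy, rfl⟩ := hx n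
  refine ⟨Gw w b, word_mem hcons hnil hB w b hb, lt_of_le_of_lt ?_ hn⟩
  calc _ ≤ c ^ w.length * dist y b := dist_word_le hcons hnil hc hG w y b
    _ ≤ c ^ w.length * r := by gcongr; exact hr hy

end Words


/-- `K_α = Σ_α ∪ ⋃_{(w,(i,j)) ∈ W_* × B} e_{ij}^w`, where `Σ_α` is the
self-similar set of `{G₁, G₂, G₃}` and `K_α` is the unique compact set satisfying
`K_α = G₁(K_α) ∪ G₂(K_α) ∪ G₃(K_α) ∪ e₁₂ ∪ e₂₃ ∪ e₃₁`. -/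
theorem stretched_SG_decomposition
    (p : Fin 3 → EuclideanSpace ℝ (Fin 2))
    (hp_sum : p 0 + p 1 + p 2 = 0)
    (hp_dist : ∀ i j : Fin 3, i ≠ j → dist (p i) (p j) = 1)
    (α : ℝ) (hα : α ∈ Set.Icc (0 : ℝ) 1)
    (G : Fin 3 → EuclideanSpace ℝ (Fin 2) → EuclideanSpace ℝ (Fin 2))
    (hG : ∀ i x, G i x = ((1 - α) / 2) • (x - p i) + p i)
    (e : Fin 3 → Fin 3 → Set (EuclideanSpace ℝ (Fin 2)))
    (he : ∀ i j, e i j = segment ℝ (G i (p j)) (G j (p i)))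
    (Gw : List (Fin 3) → EuclideanSpace ℝ (Fin 2) → EuclideanSpace ℝ (Fin 2))
    (hGw_nil : ∀ x, Gw [] x = x)
    (hGw_cons : ∀ i w x, Gw (i :: w) x = G i (Gw w x))
    (K : Set (EuclideanSpace ℝ (Fin 2)))
    (hK_compact : IsCompact K)
    (hK_eq : K = G 0 '' K ∪ G 1 '' K ∪ G 2 '' K ∪ e 0 1 ∪ e 1 2 ∪ e 2 0)
    (Sg : Set (EuclideanSpace ℝ (Fin 2)))
    (hSg_ne : Sg.Nonempty) (hSg_compact : IsCompact Sg)
    (hSg_eq : Sg = G 0 '' Sg ∪ G 1 '' Sg ∪ G 2 '' Sg) :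
    K = Sg ∪ ⋃ w : List (Fin 3),
      (Gw w '' e 0 1 ∪ Gw w '' e 1 2 ∪ Gw w '' e 2 0) := by
  have hc : 0 ≤ (1 - α) / 2 := by linarith [hα.2]
  have hc1 : (1 - α) / 2 < 1 := by linarith [hα.1]
  have hlip : ∀ i x y, dist (G i x) (G i y) ≤ (1 - α) / 2 * dist x y := by
    intro i x y
    rw [hG, hG, dist_add_right, dist_smul₀, dist_sub_right, Real.norm_of_nonneg hc]
  have hK_mem : ∀ x, x ∈ K ↔ x ∈ e 0 1 ∪ e 1 2 ∪ e 2 0 ∨ ∃ i, ∃ y ∈ K, x = G i y := by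
    intro x
    have hK_eq' : K = e 0 1 ∪ e 1 2 ∪ e 2 0 ∪ (G 0 '' K ∪ G 1 '' K ∪ G 2 '' K) := by
      rw [Set.union_comm (e 0 1 ∪ e 1 2 ∪ e 2 0)]
      simpa only [Set.union_assoc] using hK_eq
    rw [exists_mem_eq_iff, ← Set.mem_union, ← hK_eq']
  have hS_mem : ∀ x, x ∈ Sg ↔ ∃ i, ∃ y ∈ Sg, x = G i y := by
    intro x
    rw [exists_mem_eq_iff, ← hSg_eq]
  have hK_maps : ∀ i, ∀ x ∈ K, G i x ∈ K := fun i x hx => (hK_mem _).2 (Or.inr ⟨i, x, hx, rfl⟩)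
  have hS_maps : ∀ i, ∀ x ∈ Sg, G i x ∈ Sg := fun i x hx => (hS_mem _).2 ⟨i, x, hx, rfl⟩
  have hE_sub : e 0 1 ∪ e 1 2 ∪ e 2 0 ⊆ K := fun x hx => (hK_mem x).2 (Or.inl hx)
  have hK_ne : K.Nonempty := by
    refine ⟨G 0 (p 1), hE_sub (Or.inl (Or.inl ?_))⟩
    rw [he]
    exact left_mem_segment ℝ _ _
  simp only [← Set.image_union]
  apply Set.Subset.antisymm
  · intro x hx
    by_cases hxE : ∃ w, x ∈ Gw w '' (e 0 1 ∪ e 1 2 ∪ e 2 0)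
    · exact Or.inr (Set.mem_iUnion.2 hxE)
    · refine Or.inl (mem_of_forall_word hGw_cons hGw_nil hc hc1 hlip hK_compact.isBounded hSg_ne
        hSg_compact.isClosed hS_maps fun n => ?_)
      exact (exists_word_of_length hGw_cons hGw_nil (fun y => (hK_mem y).1) n x hx).resolve_left hxE
  · refine Set.union_subset (fun x hx => ?_) (Set.iUnion_subset fun w => ?_)
    · refine mem_of_forall_word hGw_cons hGw_nil hc hc1 hlip hSg_compact.isBounded hK_ne
        hK_compact.isClosed hK_maps fun n => ?_
      refine (exists_word_of_length hGw_cons hGw_nil (E := ∅)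
        (fun y hy => Or.inr ((hS_mem y).1 hy)) n x hx).resolve_left ?_
      simp
    · rintro _ ⟨y, hy, rfl⟩
      exact word_mem hGw_cons hGw_nil hK_maps w y (hE_sub hy)
end

section
/- For any α₁, α₂ ∈ (0,1), the sets K_{α₁} and K_{α₂}, each equipped with the subspace topology inherited from ℝ², are homeomorphic. -/
/-!
Write `c = (1 - α) / 2`, so that `c ∈ (0, 1/2)` and `G_i` is the homothety of ratio `c` fixing `p i`.
For two ratios `c`, `d` the homeomorphism is obtained through its graph, a compact set
`R ⊆ K₁ × K₂` satisfying the same kind of equation as `K`: it is the union of the three images of `R`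
under `G_i × G_i` and of the graphs of the affine bijections between corresponding edges.
Such an `R` exists as the largest `S ⊆ K₁ × K₂` contained in the union of pieces built from `S`
(`exists_isGraph`); its closure has the same property, so it is compact.

* `R` projects onto `K₁` (`IsGraph.exists_snd`): the largest distance from a point of `K₁` to the
  projection of `R` is at most `c` times itself.
* `R` is the graph of a function (`IsGraph.snd_unique`): let `D` be the largest value of `dist y y'`
  over pairs `(x, y), (x, y') ∈ R`. Barycentric coordinates show that two pieces of `K₁` meet only at
  an endpoint of an edge. If both points lie over the same cell, then `D ≤ d * D`; over the same edge
  `y = y'`; over a common point of a cell and an edge it remains to see that only `p j` lies over the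
  vertex `p j` (`IsGraph.vertex`), which is again a contraction argument.

The hypotheses being symmetric in the two factors, both projections of `R` are continuous bijections
from a compact space to a Hausdorff space, hence homeomorphisms.
-/

namespace StretchedSG

/-- The plane. -/
abbrev Plane := EuclideanSpace ℝ (Fin 2)

/-- The homothety of ratio `c` centred at the vertex `p i`. -/
noncomputable def cell (p : Fin 3 → Plane) (c : ℝ) (i : Fin 3) (x : Plane) : Plane :=
  c • (x - p i) + p i

/-- The point of parameter `t` on the edge joining the cells `i` and `i + 1`; indices are cyclic, so
the three edges are those from `0` to `1`, from `1` to `2` and from `2` to `0`. -/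
noncomputable def edge (p : Fin 3 → Plane) (c : ℝ) (i : Fin 3) (t : ℝ) : Plane :=
  (1 - t) • cell p c i (p (i + 1)) + t • cell p c (i + 1) (p i)

/-- The barycentric coordinate with respect to the vertex `p i`, for `p` an equilateral triangle
with side `1` centred at the origin. -/
noncomputable def bary (p : Fin 3 → Plane) (i : Fin 3) (x : Plane) : ℝ :=
  1 / 3 + 2 * inner ℝ x (p i)

/-- `p` lists the vertices of a triangle on which the functions `bary p i` are the barycentric
coordinates. -/
structure IsTriangle (p : Fin 3 → Plane) : Prop where
  bary_vertex : ∀ i j, bary p i (p j) = if i = j then 1 else 0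
  bary_sum : ∀ x, bary p 0 x + bary p 1 x + bary p 2 x = 1

/-- `K` is a stretched Sierpiński gasket of contraction ratio `c`. -/
structure IsGasket (p : Fin 3 → Plane) (c : ℝ) (K : Set Plane) : Prop where
  compact : IsCompact K
  mem_iff : ∀ x, x ∈ K ↔ (∃ i, ∃ z ∈ K, x = cell p c i z) ∨
    ∃ i, ∃ t ∈ Set.Icc (0 : ℝ) 1, x = edge p c i t

/-- The union of the images of `S` under the products of corresponding cell maps, and of the graphs
of the affine bijections between corresponding edges. -/
def pieces (p : Fin 3 → Plane) (c d : ℝ) (S : Set (Plane × Plane)) : Set (Plane × Plane) :=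
  (⋃ i, (fun q : Plane × Plane => (cell p c i q.1, cell p d i q.2)) '' S) ∪
    ⋃ i, (fun t : ℝ => (edge p c i t, edge p d i t)) '' Set.Icc 0 1

/-- `R` is a compact relation with the self-similarity expected of the graph of the homeomorphism
between the gaskets of ratios `c` and `d`. -/
structure IsGraph (p : Fin 3 → Plane) (c d : ℝ) (R : Set (Plane × Plane)) : Prop where
  compact : IsCompact R
  eq_pieces : R = pieces p c d R

variable {p : Fin 3 → Plane} {c d : ℝ}

/-! ### Barycentric coordinates and intersections of pieces -/

theorem isTriangle (hs : p 0 + p 1 + p 2 = 0)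
    (hd : ∀ i j : Fin 3, i ≠ j → dist (p i) (p j) = 1) : IsTriangle p := by
  have key : ∀ i j : Fin 3, i ≠ j →
      inner ℝ (p i) (p i) - 2 * inner ℝ (p i) (p j) + inner ℝ (p j) (p j) = 1 := by
    intro i j hij
    have h := hd i j hij
    rw [dist_eq_norm] at h
    have h2 := norm_sub_sq_real (p i) (p j)
    rw [h] at h2
    simp only [real_inner_self_eq_norm_sq]
    linarith
  have hsum : ∀ x : Plane, inner ℝ x (p 0) + inner ℝ x (p 1) + inner ℝ x (p 2) = 0 := by
    intro x
    rw [← inner_add_right, ← inner_add_right, hs, inner_zero_right]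
  have h01 := key 0 1 (by decide)
  have h12 := key 1 2 (by decide)
  have h02 := key 0 2 (by decide)
  have s0 := hsum (p 0)
  have s1 := hsum (p 1)
  have s2 := hsum (p 2)
  have c10 := real_inner_comm (p 0) (p 1)
  have c20 := real_inner_comm (p 0) (p 2)
  have c21 := real_inner_comm (p 1) (p 2)
  refine ⟨?_, ?_⟩
  · intro i j
    fin_cases i <;> fin_cases j <;> simp [bary] at * <;> linarith
  · intro x
    have := hsum x
    simp only [bary]
    linarith

theorem bary_cell (hp : IsTriangle p) (c : ℝ) (k i : Fin 3) (x : Plane) :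
    bary p k (cell p c i x) = c * bary p k x + (1 - c) * if k = i then 1 else 0 := by
  rw [← hp.bary_vertex k i]
  simp only [bary, cell, inner_add_left, inner_sub_left, inner_smul_left]
  simp
  ring

theorem bary_edge (hp : IsTriangle p) (c : ℝ) (k i : Fin 3) (t : ℝ) :
    bary p k (edge p c i t) = (1 - t) * (c * (if k = i + 1 then 1 else 0)
      + (1 - c) * if k = i then 1 else 0) + t * (c * (if k = i then 1 else 0)
      + (1 - c) * if k = i + 1 then 1 else 0) := by
  rw [← hp.bary_vertex k i, ← hp.bary_vertex k (i + 1)]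
  simp only [bary, edge, cell, inner_add_left, inner_sub_left, inner_smul_left]
  simp
  ring

theorem bary_edge_nonneg (hp : IsTriangle p) (hc : c ∈ Set.Ioo (0 : ℝ) (1 / 2)) (k i : Fin 3)
    {t : ℝ} (ht : t ∈ Set.Icc (0 : ℝ) 1) : 0 ≤ bary p k (edge p c i t) := by
  obtain ⟨h0, h1⟩ := ht
  obtain ⟨c0, c1⟩ := hc
  have h1' : 0 ≤ 1 - t := by linarith
  have c1' : 0 ≤ 1 - c := by linarith
  rw [bary_edge hp]
  positivity

theorem cell_injective (hc : c ≠ 0) (i : Fin 3) : Function.Injective (cell p c i) := by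
  intro x y h
  simpa [cell, hc] using h

theorem dist_cell (hc : 0 ≤ c) (i : Fin 3) (x y : Plane) :
    dist (cell p c i x) (cell p c i y) = c * dist x y := by
  simp only [cell, dist_add_right, dist_smul₀, Real.norm_eq_abs, abs_of_nonneg hc, dist_sub_right]

theorem cell_vertex (c : ℝ) (i : Fin 3) : cell p c i (p i) = p i := by
  simp [cell]

theorem edge_zero (c : ℝ) (i : Fin 3) : edge p c i 0 = cell p c i (p (i + 1)) := by
  simp [edge]

theorem edge_one (c : ℝ) (i : Fin 3) : edge p c i 1 = cell p c (i + 1) (p i) := by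
  simp [edge]

theorem continuous_cell (c : ℝ) (i : Fin 3) : Continuous (cell p c i) := by
  unfold cell; fun_prop

theorem continuous_edge (c : ℝ) (i : Fin 3) : Continuous (edge p c i) := by
  unfold edge; fun_prop

theorem continuous_bary (i : Fin 3) : Continuous (bary p i) := by
  unfold bary; fun_prop

theorem bary_le_one (hp : IsTriangle p) {x : Plane} (hx : ∀ k, 0 ≤ bary p k x) (k : Fin 3) :
    bary p k x ≤ 1 := by
  have h := hp.bary_sum x
  have h0 := hx 0
  have h1 := hx 1
  have h2 := hx 2
  fin_cases k <;> simp <;> linarith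

theorem fin_three_cases (i j : Fin 3) : i = j ∨ i = j + 1 ∨ i = j + 2 := by
  revert i j; decide

theorem cell_eq_cell (hp : IsTriangle p) (hc : c ∈ Set.Ioo (0 : ℝ) (1 / 2)) {i j : Fin 3}
    {z z' : Plane} (hz : ∀ k, 0 ≤ bary p k z) (hz' : ∀ k, 0 ≤ bary p k z')
    (h : cell p c i z = cell p c j z') : i = j := by
  by_contra hij
  obtain ⟨c0, c1⟩ := hc
  have h1 := congrArg (bary p i) h
  simp only [bary_cell hp, if_true, if_neg hij] at h1
  have h2 := mul_nonneg c0.le (hz i)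
  have h3 := mul_le_mul_of_nonneg_left (bary_le_one hp hz' i) c0.le
  linarith

theorem cell_eq_edge (hp : IsTriangle p) (hc : c ∈ Set.Ioo (0 : ℝ) (1 / 2)) {i j : Fin 3}
    {z : Plane} (hz : ∀ k, 0 ≤ bary p k z) {t : ℝ} (ht : t ∈ Set.Icc (0 : ℝ) 1)
    (h : cell p c i z = edge p c j t) : (i = j ∧ t = 0) ∨ (i = j + 1 ∧ t = 1) := by
  obtain ⟨c0, c1⟩ := hc
  obtain ⟨t0, t1⟩ := ht
  have h1 := congrArg (bary p i) h
  rw [bary_cell hp, bary_edge hp] at h1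
  have h2 := mul_nonneg c0.le (hz i)
  rcases fin_three_cases i j with rfl | rfl | rfl
  · left
    simp at h1
    refine ⟨rfl, ?_⟩
    nlinarith
  · right
    simp at h1
    refine ⟨rfl, ?_⟩
    nlinarith
  · simp at h1
    linarith

theorem edge_eq_edge (hp : IsTriangle p) (hc : c ∈ Set.Ioo (0 : ℝ) (1 / 2)) {i j : Fin 3}
    {s t : ℝ} (hs : s ∈ Set.Icc (0 : ℝ) 1) (ht : t ∈ Set.Icc (0 : ℝ) 1)
    (h : edge p c i s = edge p c j t) : i = j ∧ s = t := by
  obtain ⟨c0, c1⟩ := hc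
  obtain ⟨t0, t1⟩ := ht
  obtain ⟨s0, s1⟩ := hs
  -- The coordinate opposite to edge `j` vanishes on that edge, and is at least `c` on the others.
  have h1 := congrArg (bary p (j + 2)) h
  have h2 := congrArg (bary p j) h
  rw [bary_edge hp, bary_edge hp] at h1 h2
  rcases fin_three_cases i j with rfl | rfl | rfl
  · simp at h2
    refine ⟨rfl, ?_⟩
    have : (s - t) * (1 - 2 * c) = 0 := by linarith
    rcases mul_eq_zero.1 this with h | h <;> linarith
  · fin_cases j <;> simp at h1 <;> nlinarith
  · fin_cases j <;> simp at h1 <;> nlinarith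

/-- On a compact set covered by its own images under the cell maps and by the edges, all barycentric
coordinates are nonnegative: a negative minimum would be increased by the cell maps. -/
theorem bary_nonneg (hp : IsTriangle p) (hc : c ∈ Set.Ioo (0 : ℝ) (1 / 2)) {K : Set Plane}
    (hK : IsCompact K) (hcov : ∀ x ∈ K, (∃ i, ∃ z ∈ K, x = cell p c i z) ∨
      ∃ i, ∃ t ∈ Set.Icc (0 : ℝ) 1, x = edge p c i t)
    {x : Plane} (hx : x ∈ K) (k : Fin 3) : 0 ≤ bary p k x := by
  obtain ⟨m, hm, hmin⟩ := hK.exists_isMinOn ⟨x, hx⟩ (continuous_bary (p := p) k).continuousOn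
  refine le_trans ?_ (hmin hx)
  rcases hcov m hm with ⟨i, z, hz, rfl⟩ | ⟨i, t, ht, rfl⟩
  · have h1 : bary p k (cell p c i z) ≤ bary p k z := hmin hz
    obtain ⟨c0, c1⟩ := hc
    have h2 : 0 ≤ (1 - c) * if k = i then (1 : ℝ) else 0 := by
      have : 0 ≤ 1 - c := by linarith
      positivity
    have h3 := bary_cell hp c k i z
    nlinarith
  · exact bary_edge_nonneg hp hc k i ht

/-! ### The graph relation -/

theorem mem_pieces {S : Set (Plane × Plane)} {q : Plane × Plane} :
    q ∈ pieces p c d S ↔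
      (∃ i, ∃ r ∈ S, q = (cell p c i r.1, cell p d i r.2)) ∨
      ∃ i, ∃ t ∈ Set.Icc (0 : ℝ) 1, q = (edge p c i t, edge p d i t) := by
  simp only [pieces, Set.mem_union, Set.mem_iUnion, Set.mem_image, eq_comm]

theorem pieces_mono {S T : Set (Plane × Plane)} (h : S ⊆ T) : pieces p c d S ⊆ pieces p c d T :=
  Set.union_subset_union_left _ (Set.iUnion_mono fun _ => Set.image_mono h)

theorem isCompact_pieces {S : Set (Plane × Plane)} (h : IsCompact S) :
    IsCompact (pieces p c d S) := by
  refine IsCompact.union (isCompact_iUnion fun i => h.image ?_)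
    (isCompact_iUnion fun i => isCompact_Icc.image ?_)
  · exact ((continuous_cell c i).comp continuous_fst).prodMk
      ((continuous_cell d i).comp continuous_snd)
  · exact (continuous_edge c i).prodMk (continuous_edge d i)

theorem IsGraph.swap {R : Set (Plane × Plane)} (hR : IsGraph p c d R) :
    IsGraph p d c (Prod.swap '' R) := by
  refine ⟨hR.compact.image continuous_swap, ?_⟩
  conv_lhs => rw [hR.eq_pieces]
  simp only [pieces, Set.image_union, Set.image_iUnion, Set.image_image, Prod.fst_swap,
    Prod.snd_swap, Prod.swap_prod_mk]

theorem IsGraph.bary_fst_nonneg {R : Set (Plane × Plane)} (hR : IsGraph p c d R)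
    (hp : IsTriangle p) (hc : c ∈ Set.Ioo (0 : ℝ) (1 / 2)) {q : Plane × Plane} (hq : q ∈ R)
    (k : Fin 3) : 0 ≤ bary p k q.1 := by
  refine bary_nonneg hp hc (hR.compact.image continuous_fst) ?_ (Set.mem_image_of_mem _ hq) k
  rintro _ ⟨r, hr, rfl⟩
  rw [hR.eq_pieces, mem_pieces] at hr
  rcases hr with ⟨i, s, hs, rfl⟩ | ⟨i, t, ht, rfl⟩
  · exact Or.inl ⟨i, s.1, Set.mem_image_of_mem _ hs, rfl⟩
  · exact Or.inr ⟨i, t, ht, rfl⟩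

/-- The only point related to a vertex is the vertex itself. -/
theorem IsGraph.vertex {R : Set (Plane × Plane)} (hR : IsGraph p c d R)
    (hp : IsTriangle p) (hc : c ∈ Set.Ioo (0 : ℝ) (1 / 2)) (hd : d ∈ Set.Ioo (0 : ℝ) (1 / 2))
    {j : Fin 3} {w : Plane} (hw : (p j, w) ∈ R) : w = p j := by
  have hcpt : IsCompact (R ∩ {q | q.1 = p j}) :=
    hR.compact.inter_right (isClosed_eq continuous_fst continuous_const)
  obtain ⟨⟨x, m⟩, ⟨hm, hx⟩, hmax⟩ := hcpt.exists_isMaxOn ⟨(p j, w), hw, rfl⟩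
    (f := fun q : Plane × Plane => dist q.2 (p j)) (by fun_prop)
  have hle : dist w (p j) ≤ dist m (p j) := isMaxOn_iff.1 hmax (p j, w) ⟨hw, rfl⟩
  obtain rfl : x = p j := hx
  rw [hR.eq_pieces, mem_pieces] at hm
  rcases hm with ⟨i, r, hr, hq⟩ | ⟨i, t, ht, hq⟩
  · obtain ⟨h1, h2⟩ := Prod.mk.inj hq
    have hv : ∀ k, 0 ≤ bary p k (p j) := fun k => by rw [hp.bary_vertex]; positivity
    obtain rfl : j = i := by
      refine cell_eq_cell hp hc hv (hR.bary_fst_nonneg hp hc hr) ?_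
      · rw [cell_vertex]; exact h1
    have h3 : r.1 = p j := cell_injective hc.1.ne' j (by rw [cell_vertex]; exact h1.symm)
    have h4 : dist r.2 (p j) ≤ dist m (p j) := isMaxOn_iff.1 hmax r ⟨hr, h3⟩
    have h5 : dist m (p j) = d * dist r.2 (p j) := by
      conv_lhs => rw [h2, ← cell_vertex (p := p) d j]
      exact dist_cell hd.1.le _ _ _
    have h6 := hd.2
    have h7 := hd.1
    have h8 : dist w (p j) ≤ 0 := by nlinarith [dist_nonneg (x := r.2) (y := p j)]
    exact dist_le_zero.1 h8
  · obtain ⟨h1, h2⟩ := Prod.mk.inj hq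
    have hc' := cell_eq_edge hp hc (i := j) (z := p j)
      (fun k => by rw [hp.bary_vertex]; positivity) ht (by rw [cell_vertex]; exact h1)
    exfalso
    -- The endpoints of the edges are not vertices of the triangle.
    have h3 := congrArg (bary p j) h1
    rw [hp.bary_vertex, bary_edge hp] at h3
    have h4 := hc.2
    have h5 := hc.1
    rcases hc' with ⟨rfl, rfl⟩ | ⟨rfl, rfl⟩ <;> simp at h3 <;> linarith

/-- `R` is single-valued at a common point of a cell and an edge. -/
theorem IsGraph.cell_edge {R : Set (Plane × Plane)} (hR : IsGraph p c d R)
    (hp : IsTriangle p) (hc : c ∈ Set.Ioo (0 : ℝ) (1 / 2)) (hd : d ∈ Set.Ioo (0 : ℝ) (1 / 2))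
    {i j : Fin 3} {r : Plane × Plane} (hr : r ∈ R) {t : ℝ} (ht : t ∈ Set.Icc (0 : ℝ) 1)
    (h : cell p c i r.1 = edge p c j t) : cell p d i r.2 = edge p d j t := by
  obtain ⟨x, y⟩ := r
  rcases cell_eq_edge hp hc (hR.bary_fst_nonneg hp hc hr) ht h with ⟨rfl, rfl⟩ | ⟨rfl, rfl⟩
  · rw [edge_zero] at h ⊢
    obtain rfl := cell_injective hc.1.ne' _ h
    rw [hR.vertex hp hc hd hr]
  · rw [edge_one] at h ⊢
    obtain rfl := cell_injective hc.1.ne' _ h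
    rw [hR.vertex hp hc hd hr]

theorem IsGraph.snd_unique {R : Set (Plane × Plane)} (hR : IsGraph p c d R)
    (hp : IsTriangle p) (hc : c ∈ Set.Ioo (0 : ℝ) (1 / 2)) (hd : d ∈ Set.Ioo (0 : ℝ) (1 / 2))
    {x y y' : Plane} (hy : (x, y) ∈ R) (hy' : (x, y') ∈ R) : y = y' := by
  have hcpt : IsCompact ((R ×ˢ R) ∩ {q | q.1.1 = q.2.1}) :=
    (hR.compact.prod hR.compact).inter_right (isClosed_eq (by fun_prop) (by fun_prop))
  obtain ⟨⟨⟨a, m⟩, ⟨a', m'⟩⟩, ⟨⟨hm, hm'⟩, haa⟩, hmax⟩ :=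
    hcpt.exists_isMaxOn ⟨((x, y), (x, y')), ⟨hy, hy'⟩, rfl⟩
      (f := fun q : (Plane × Plane) × (Plane × Plane) => dist q.1.2 q.2.2) (by fun_prop)
  have hle : dist y y' ≤ dist m m' := isMaxOn_iff.1 hmax ((x, y), (x, y')) ⟨⟨hy, hy'⟩, rfl⟩
  suffices h0 : dist m m' ≤ 0 from dist_le_zero.1 (hle.trans h0)
  simp only [Set.mem_ofPred_eq] at haa hm hm'
  subst haa
  rw [hR.eq_pieces, mem_pieces] at hm hm'
  rcases hm with ⟨i, r, hr, hq⟩ | ⟨i, t, ht, hq⟩ <;>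
    rcases hm' with ⟨i', r', hr', hq'⟩ | ⟨i', t', ht', hq'⟩ <;>
    obtain ⟨h1, h2⟩ := Prod.mk.inj hq <;> obtain ⟨h1', h2'⟩ := Prod.mk.inj hq'
  · obtain rfl : i = i' := cell_eq_cell hp hc (hR.bary_fst_nonneg hp hc hr)
      (hR.bary_fst_nonneg hp hc hr') (h1.symm.trans h1')
    have h3 : r.1 = r'.1 := cell_injective hc.1.ne' i (h1.symm.trans h1')
    have h4 : dist r.2 r'.2 ≤ dist m m' := isMaxOn_iff.1 hmax (r, r') ⟨⟨hr, hr'⟩, h3⟩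
    have h5 : dist m m' = d * dist r.2 r'.2 := by
      rw [h2, h2', dist_cell hd.1.le]
    have h6 := hd.2
    have h7 := hd.1
    nlinarith [dist_nonneg (x := r.2) (y := r'.2)]
  · rw [h2, h2', hR.cell_edge hp hc hd hr ht' (h1.symm.trans h1'), dist_self]
  · rw [h2, h2', hR.cell_edge hp hc hd hr' ht (h1'.symm.trans h1), dist_self]
  · obtain ⟨rfl, rfl⟩ := edge_eq_edge hp hc ht ht' (h1.symm.trans h1')
    rw [h2, h2', dist_self]

theorem IsGraph.exists_snd {R : Set (Plane × Plane)} (hR : IsGraph p c d R)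
    (hc : c ∈ Set.Ioo (0 : ℝ) (1 / 2)) {K : Set Plane} (hK : IsGasket p c K) {x : Plane}
    (hx : x ∈ K) : ∃ y, (x, y) ∈ R := by
  have hcl : IsClosed (Prod.fst '' R) := (hR.compact.image continuous_fst).isClosed
  have hedge : ∀ i, ∀ t ∈ Set.Icc (0 : ℝ) 1, edge p c i t ∈ Prod.fst '' R := by
    intro i t ht
    refine ⟨(edge p c i t, edge p d i t), ?_, rfl⟩
    rw [hR.eq_pieces, mem_pieces]
    exact Or.inr ⟨i, t, ht, rfl⟩
  have hcell : ∀ i, ∀ z ∈ Prod.fst '' R, cell p c i z ∈ Prod.fst '' R := by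
    rintro i _ ⟨r, hr, rfl⟩
    refine ⟨(cell p c i r.1, cell p d i r.2), ?_, rfl⟩
    rw [hR.eq_pieces, mem_pieces]
    exact Or.inl ⟨i, r, hr, rfl⟩
  have hne : (Prod.fst '' R).Nonempty := ⟨_, hedge 0 0 (by simp)⟩
  obtain ⟨m, hm, hmax⟩ := hK.compact.exists_isMaxOn ⟨x, hx⟩
    (Metric.continuous_infDist_pt (Prod.fst '' R)).continuousOn
  have hle : Metric.infDist x (Prod.fst '' R) ≤ Metric.infDist m (Prod.fst '' R) := hmax hx
  have h0 : Metric.infDist m (Prod.fst '' R) ≤ 0 := by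
    rcases (hK.mem_iff m).1 hm with ⟨i, z, hz, rfl⟩ | ⟨i, t, ht, rfl⟩
    · obtain ⟨w, hw, hwz⟩ := (hR.compact.image continuous_fst).exists_infDist_eq_dist hne z
      have h1 := Metric.infDist_le_dist_of_mem (x := cell p c i z) (hcell i w hw)
      have h2 : Metric.infDist z (Prod.fst '' R) ≤ Metric.infDist (cell p c i z) (Prod.fst '' R) :=
        hmax hz
      rw [dist_cell hc.1.le] at h1
      have h3 := hc.1
      have h4 := hc.2
      nlinarith [dist_nonneg (x := z) (y := w)]
    · exact (Metric.infDist_zero_of_mem (hedge i t ht)).le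
  obtain ⟨⟨x', y⟩, hy, rfl⟩ := (hcl.mem_iff_infDist_zero hne).2
    (le_antisymm (hle.trans h0) Metric.infDist_nonneg)
  exact ⟨y, hy⟩

theorem exists_isGraph {K L : Set Plane} (hK : IsGasket p c K) (hL : IsGasket p d L) :
    ∃ R, IsGraph p c d R ∧ R ⊆ K ×ˢ L := by
  set R : Set (Plane × Plane) := ⋃₀ {S | S ⊆ K ×ˢ L ∧ S ⊆ pieces p c d S} with hRdef
  have hmax : ∀ S, S ⊆ K ×ˢ L → S ⊆ pieces p c d S → S ⊆ R := fun S h1 h2 =>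
    Set.subset_sUnion_of_mem (show S ∈ {S | S ⊆ K ×ˢ L ∧ S ⊆ pieces p c d S} from ⟨h1, h2⟩)
  have hKL : IsCompact (K ×ˢ L) := hK.compact.prod hL.compact
  have hsub : R ⊆ K ×ˢ L := Set.sUnion_subset fun S hS => hS.1
  have hpost : R ⊆ pieces p c d R := by
    refine Set.sUnion_subset fun S hS => hS.2.trans (pieces_mono ?_)
    exact hmax S hS.1 hS.2
  have hpsub : pieces p c d R ⊆ K ×ˢ L := by
    intro q hq
    rcases mem_pieces.1 hq with ⟨i, r, hr, rfl⟩ | ⟨i, t, ht, rfl⟩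
    · exact ⟨(hK.mem_iff _).2 (Or.inl ⟨i, _, (hsub hr).1, rfl⟩),
        (hL.mem_iff _).2 (Or.inl ⟨i, _, (hsub hr).2, rfl⟩)⟩
    · exact ⟨(hK.mem_iff _).2 (Or.inr ⟨i, t, ht, rfl⟩),
        (hL.mem_iff _).2 (Or.inr ⟨i, t, ht, rfl⟩)⟩
  have hclsub : closure R ⊆ K ×ˢ L := closure_minimal hsub hKL.isClosed
  have hclc : IsCompact (closure R) := hKL.of_isClosed_subset isClosed_closure hclsub
  have hcl : closure R ⊆ R := by
    refine hmax _ hclsub (closure_minimal ?_ (isCompact_pieces hclc).isClosed)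
    exact hpost.trans (pieces_mono subset_closure)
  refine ⟨R, ⟨?_, ?_⟩, hsub⟩
  · exact hcl.antisymm subset_closure ▸ hclc
  · exact hpost.antisymm (hmax _ hpsub (pieces_mono hpost))

/-! ### The homeomorphism -/

/-- The first projection is a homeomorphism from the graph onto the gasket. -/
theorem IsGraph.homeomorph_fst {R : Set (Plane × Plane)} (hR : IsGraph p c d R)
    (hp : IsTriangle p) (hc : c ∈ Set.Ioo (0 : ℝ) (1 / 2)) (hd : d ∈ Set.Ioo (0 : ℝ) (1 / 2))
    {K : Set Plane} (hK : IsGasket p c K) (hsub : ∀ q ∈ R, q.1 ∈ K) : Nonempty (R ≃ₜ K) := by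
  have : CompactSpace R := isCompact_iff_compactSpace.1 hR.compact
  let f : R → K := fun q => ⟨q.1.1, hsub _ q.2⟩
  have hf : Continuous f := by fun_prop
  have hbij : Function.Bijective f := by
    constructor
    · rintro ⟨⟨x, y⟩, h⟩ ⟨⟨x', y'⟩, h'⟩ hxx
      obtain rfl : x = x' := congrArg Subtype.val hxx
      obtain rfl := hR.snd_unique hp hc hd h h'
      rfl
    · rintro ⟨x, hx⟩
      obtain ⟨y, hy⟩ := hR.exists_snd hc hK hx
      exact ⟨⟨(x, y), hy⟩, rfl⟩
  exact ⟨Continuous.homeoOfEquivCompactToT2 (f := Equiv.ofBijective f hbij) hf⟩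

theorem homeomorph (hp : IsTriangle p) (hc : c ∈ Set.Ioo (0 : ℝ) (1 / 2))
    (hd : d ∈ Set.Ioo (0 : ℝ) (1 / 2)) {K L : Set Plane} (hK : IsGasket p c K)
    (hL : IsGasket p d L) : Nonempty (K ≃ₜ L) := by
  obtain ⟨R, hR, hsub⟩ := exists_isGraph hK hL
  obtain ⟨f⟩ := hR.homeomorph_fst hp hc hd hK fun q hq => (hsub hq).1
  obtain ⟨g⟩ := hR.swap.homeomorph_fst hp hd hc hL
    (by rintro _ ⟨q, hq, rfl⟩; exact (hsub hq).2)
  exact ⟨f.symm.trans (((Homeomorph.prodComm Plane Plane).image R).trans g)⟩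

theorem isGasket {K : Set Plane}
    (hcpt : IsCompact K)
    (h : K = cell p c 0 '' K ∪ cell p c 1 '' K ∪ cell p c 2 '' K ∪
      segment ℝ (cell p c 0 (p 1)) (cell p c 1 (p 0)) ∪
      segment ℝ (cell p c 1 (p 2)) (cell p c 2 (p 1)) ∪
      segment ℝ (cell p c 2 (p 0)) (cell p c 0 (p 2))) : IsGasket p c K := by
  refine ⟨hcpt, fun x => ?_⟩
  conv_lhs => rw [h]
  simp only [segment_eq_image, Set.mem_union, Set.mem_image, Fin.exists_fin_succ, edge, eq_comm (a := x)]
  simp [or_assoc]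

end StretchedSG

open StretchedSG in

/-- For any α₁, α₂ ∈ (0,1), the sets `K_{α₁}` and `K_{α₂}` (with the
subspace topology inherited from ℝ²) are homeomorphic. -/
theorem stretched_SG_pairwise_homeomorphic
    (p : Fin 3 → EuclideanSpace ℝ (Fin 2))
    (hp_sum : p 0 + p 1 + p 2 = 0)
    (hp_dist : ∀ i j : Fin 3, i ≠ j → dist (p i) (p j) = 1)
    (G : ℝ → Fin 3 → EuclideanSpace ℝ (Fin 2) → EuclideanSpace ℝ (Fin 2))
    (hG : ∀ a i x, G a i x = ((1 - a) / 2) • (x - p i) + p i)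
    (e : ℝ → Fin 3 → Fin 3 → Set (EuclideanSpace ℝ (Fin 2)))
    (he : ∀ a i j, e a i j = segment ℝ (G a i (p j)) (G a j (p i)))
    (α₁ α₂ : ℝ) (hα₁ : α₁ ∈ Set.Ioo (0 : ℝ) 1) (hα₂ : α₂ ∈ Set.Ioo (0 : ℝ) 1)
    (K₁ K₂ : Set (EuclideanSpace ℝ (Fin 2)))
    (hK₁_compact : IsCompact K₁)
    (hK₁_eq : K₁ = G α₁ 0 '' K₁ ∪ G α₁ 1 '' K₁ ∪ G α₁ 2 '' K₁ ∪
      e α₁ 0 1 ∪ e α₁ 1 2 ∪ e α₁ 2 0)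
    (hK₂_compact : IsCompact K₂)
    (hK₂_eq : K₂ = G α₂ 0 '' K₂ ∪ G α₂ 1 '' K₂ ∪ G α₂ 2 '' K₂ ∪
      e α₂ 0 1 ∪ e α₂ 1 2 ∪ e α₂ 2 0) :
    Nonempty (K₁ ≃ₜ K₂) := by
  obtain rfl : G = fun a i x => cell p ((1 - a) / 2) i x := by
    funext a i x
    exact hG a i x
  obtain rfl : e = fun a i j => segment ℝ (cell p ((1 - a) / 2) i (p j))
      (cell p ((1 - a) / 2) j (p i)) := by
    funext a i j
    exact he a i j
  have hratio : ∀ a ∈ Set.Ioo (0 : ℝ) 1, (1 - a) / 2 ∈ Set.Ioo (0 : ℝ) (1 / 2) := by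
    rintro a ⟨h0, h1⟩
    constructor <;> linarith
  exact homeomorph (isTriangle hp_sum hp_dist) (hratio α₁ hα₁) (hratio α₂ hα₂)
    (isGasket hK₁_compact hK₁_eq) (isGasket hK₂_compact hK₂_eq)
end

section
/- Let α ∈ (0,1) and let r, ρ > 0. Define the quadratic form E₁ on functions u : V₁ → ℝ by E₁(u,u) = (1/r)Q₁^Σ(u,u) + (1/ρ)Q₁^I(u,u). Then the following are equivalent: (i) for every f : V₀ → ℝ, the minimum of E₁(v,v) over all v : V₁ → ℝ with v|_{V₀} = f is attained and equals Q₀(f,f); (ii) (5/3)r + ρ = 1. -/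
/-!
A function `v` on `V₁` is the array of its nine values `w i j = v (G i (p j))`, with
`w i i = v (p i)`; these nine points are distinct because `(1 - α)/2 < 1/2`, so every array occurs.
Read `E₁` as the energy of a resistor network with resistances `r` inside the cells and `ρ` on the
connecting edges. Two Δ–Y transforms show that it is equivalent to a triangle with resistance
`s = (5/3) r + ρ` on each side. Completing the square on each edge around the corresponding current
(`energy_eq`) gives `E₁(v) = Q₀(f)/s` plus a weighted sum of squares that vanishes at the harmonic
extension (`energy_harmonicExt`). Hence the minimum of `E₁` is `Q₀(f)/s` for every `f`, and it
equals `Q₀(f)` for all `f` exactly when `s = 1`.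
-/

/-- The energy `E₁` in terms of the array `w i j = v (G i (p j))`. -/
noncomputable def energy (r ρ : ℝ) (w : Fin 3 → Fin 3 → ℝ) : ℝ :=
  (1 / r) * ∑ i, ((w i 0 - w i 1) ^ 2 + (w i 1 - w i 2) ^ 2 + (w i 2 - w i 0) ^ 2) +
    (1 / ρ) * ((w 0 1 - w 1 0) ^ 2 + (w 1 2 - w 2 1) ^ 2 + (w 2 0 - w 0 2) ^ 2)

/-- The energy `Q₀` of boundary values `a`. -/
def boundaryEnergy (a : Fin 3 → ℝ) : ℝ :=
  (a 0 - a 1) ^ 2 + (a 1 - a 2) ^ 2 + (a 2 - a 0) ^ 2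

/-- The potential of the current flow with boundary values `a`. The off-diagonal entry equals
`a i - r / (3 s) * (2 (a i - a j) + (a i - a k))` with `k` the third index and
`s = (5/3) r + ρ`. -/
noncomputable def harmonicExt (r ρ : ℝ) (a : Fin 3 → ℝ) (i j : Fin 3) : ℝ :=
  if i = j then a i
  else a i - r / (3 * (5 / 3 * r + ρ)) * (4 * a i - a j - (a 0 + a 1 + a 2))

/-- Completing the square on each edge around the current of `harmonicExt`: the linear terms cancel
because the currents satisfy Kirchhoff's law at the six interior points. -/
lemma energy_eq {r ρ : ℝ} (hr : 0 < r) (hρ : 0 < ρ) (w : Fin 3 → Fin 3 → ℝ) :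
    energy r ρ w = boundaryEnergy (fun i => w i i) / (5 / 3 * r + ρ) +
      energy r ρ (fun i j => w i j - harmonicExt r ρ (fun i => w i i) i j) := by
  have hs : 5 * r + 3 * ρ ≠ 0 := by positivity
  have h1 : 5 / 3 * r + ρ = (5 * r + 3 * ρ) / 3 := by ring
  simp only [energy, boundaryEnergy, harmonicExt, Fin.sum_univ_three, h1]
  simp
  field_simp
  ring

lemma energy_nonneg {r ρ : ℝ} (hr : 0 < r) (hρ : 0 < ρ) (w : Fin 3 → Fin 3 → ℝ) :
    0 ≤ energy r ρ w := by
  unfold energy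
  positivity

lemma energy_harmonicExt {r ρ : ℝ} (hr : 0 < r) (hρ : 0 < ρ) (a : Fin 3 → ℝ) :
    energy r ρ (harmonicExt r ρ a) = boundaryEnergy a / (5 / 3 * r + ρ) := by
  have hd : (fun i => harmonicExt r ρ a i i) = a := by
    ext i
    simp [harmonicExt]
  rw [energy_eq hr hρ, hd]
  simp [energy]

/-- If `c < 1/2`, the images of the vertices of an equilateral triangle under the three contractions
of ratio `c` fixing its vertices are nine distinct points: if two points in different cells
coincided, a vector of length at most `c` would equal one of length `1 - c`. -/
lemma injective_cells {p : Fin 3 → EuclideanSpace ℝ (Fin 2)}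
    (hp : ∀ i j : Fin 3, i ≠ j → dist (p i) (p j) = 1) {c : ℝ} (hc : 0 < c) (hc' : c < 1 / 2) :
    Function.Injective (fun q : Fin 3 × Fin 3 => c • (p q.2 - p q.1) + p q.1) := by
  rintro ⟨i, j⟩ ⟨i', j'⟩ h
  have hv : c • (p j - p j') = (1 - c) • (p i' - p i) := by
    have h' : c • (p j - p i) + p i = c • (p j' - p i') + p i' := h
    linear_combination (norm := module) h'
  have hn : c * dist (p j) (p j') = (1 - c) * dist (p i') (p i) := by
    have := congrArg norm hv
    rwa [norm_smul, norm_smul, Real.norm_of_nonneg hc.le, Real.norm_of_nonneg (by linarith),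
      ← dist_eq_norm, ← dist_eq_norm] at this
  have hi : i = i' := by
    by_contra hne
    rw [hp i' i (Ne.symm hne)] at hn
    rcases eq_or_ne j j' with rfl | hj
    · rw [dist_self] at hn
      linarith
    · rw [hp j j' hj] at hn
      linarith
  subst hi
  have hj : j = j' := by
    by_contra hne
    rw [hp j j' hne, dist_self] at hn
    linarith
  rw [hj]


/-- For r, ρ > 0 and `E₁(u,u) = (1/r)Q₁^Σ(u,u) + (1/ρ)Q₁^I(u,u)` on
`ℓ(V₁)`, the trace property (for every f on V₀, the minimum of `E₁(v,v)` over all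
extensions v with `v|_{V₀} = f` is attained and equals `Q₀(f,f)`) holds if and only if
`(5/3)r + ρ = 1`, i.e. `(r,ρ)` is a matching pair. -/
theorem matching_pair_iff_compatible
    (p : Fin 3 → EuclideanSpace ℝ (Fin 2))
    (hp_sum : p 0 + p 1 + p 2 = 0)
    (hp_dist : ∀ i j : Fin 3, i ≠ j → dist (p i) (p j) = 1)
    (α : ℝ) (hα : α ∈ Set.Ioo (0 : ℝ) 1)
    (G : Fin 3 → EuclideanSpace ℝ (Fin 2) → EuclideanSpace ℝ (Fin 2))
    (hG : ∀ i x, G i x = ((1 - α) / 2) • (x - p i) + p i)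
    (r ρ : ℝ) (hr : 0 < r) (hρ : 0 < ρ)
    (Q0 : (EuclideanSpace ℝ (Fin 2) → ℝ) → ℝ)
    (hQ0 : ∀ u, Q0 u =
      (u (p 0) - u (p 1)) ^ 2 + (u (p 1) - u (p 2)) ^ 2 + (u (p 2) - u (p 0)) ^ 2)
    (Q1S Q1I : (EuclideanSpace ℝ (Fin 2) → ℝ) → ℝ)
    (hQ1S : ∀ u, Q1S u = ∑ i : Fin 3, Q0 (u ∘ G i))
    (hQ1I : ∀ u, Q1I u =
      (u (G 0 (p 1)) - u (G 1 (p 0))) ^ 2 + (u (G 1 (p 2)) - u (G 2 (p 1))) ^ 2 +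
        (u (G 2 (p 0)) - u (G 0 (p 2))) ^ 2)
    (E1 : (EuclideanSpace ℝ (Fin 2) → ℝ) → ℝ)
    (hE1 : ∀ u, E1 u = (1 / r) * Q1S u + (1 / ρ) * Q1I u) :
    (∀ f : EuclideanSpace ℝ (Fin 2) → ℝ,
        IsLeast {x : ℝ | ∃ v : EuclideanSpace ℝ (Fin 2) → ℝ,
          (∀ i : Fin 3, v (p i) = f (p i)) ∧ x = E1 v} (Q0 f))
      ↔ (5 / 3) * r + ρ = 1 := by
  obtain ⟨hα0, hα1⟩ := hα
  have hs : 0 < 5 / 3 * r + ρ := by positivity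
  have hGp : ∀ i, G i (p i) = p i := fun i => by simp [hG]
  have hQ : ∀ f, Q0 f = boundaryEnergy (fun i => f (p i)) := hQ0
  have hE : ∀ v, E1 v = energy r ρ (fun i j => v (G i (p j))) := fun v => by
    simp [hE1, hQ1S, hQ1I, hQ0, energy]
  have hinj : Function.Injective (fun q : Fin 3 × Fin 3 => G q.1 (p q.2)) := by
    simpa only [hG] using
      injective_cells hp_dist (c := (1 - α) / 2) (by linarith) (by linarith)
  have hmin : ∀ f : EuclideanSpace ℝ (Fin 2) → ℝ,
      IsLeast {x : ℝ | ∃ v : EuclideanSpace ℝ (Fin 2) → ℝ,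
        (∀ i : Fin 3, v (p i) = f (p i)) ∧ x = E1 v} (Q0 f / (5 / 3 * r + ρ)) := by
    intro f
    constructor
    · let v := Function.extend (fun q : Fin 3 × Fin 3 => G q.1 (p q.2))
        (fun q => harmonicExt r ρ (fun i => f (p i)) q.1 q.2) 0
      have hv : ∀ i j, v (G i (p j)) = harmonicExt r ρ (fun i => f (p i)) i j :=
        fun i j => hinj.extend_apply _ _ (i, j)
      refine ⟨v, fun i => ?_, ?_⟩
      · rw [← hGp i, hv, hGp]
        simp [harmonicExt]
      · simp only [hE, hv]
        rw [hQ, ← energy_harmonicExt hr hρ]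
    · rintro x ⟨v, hvf, rfl⟩
      rw [hE, energy_eq hr hρ, hQ]
      simp only [hGp, hvf]
      exact le_add_of_nonneg_right (energy_nonneg hr hρ _)
  constructor
  · intro h
    -- the indicator function of `p 0` has `Q0 = 2 ≠ 0`
    have hne : ∀ i j : Fin 3, i ≠ j → p i ≠ p j := fun i j hij he => by
      simpa [he] using hp_dist i j hij
    let f : EuclideanSpace ℝ (Fin 2) → ℝ := Pi.single (p 0) 1
    have hf : Q0 f = 2 := by
      rw [hQ0]
      simp only [f, Pi.single_eq_same, Pi.single_eq_of_ne (hne 1 0 (by decide)),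
        Pi.single_eq_of_ne (hne 2 0 (by decide))]
      norm_num
    have h2 := (hmin f).unique (h f)
    rw [hf, div_eq_iff hs.ne'] at h2
    linarith
  · intro h f
    simpa [h] using hmin f
end

section
/- Let α ∈ (0,1), let δ_m > 0 for m ≥ 1 and γ_k > 0 for k ≥ 1, define E₀(u,u) = Q₀^Σ(u,u) for u : V₀ → ℝ and, for m ≥ 1 and u : V_m → ℝ, E_m(u,u) = (1/δ_m)Q_m^Σ(u,u) + Σ_{k=1}^m (1/γ_k)Q_k^I(u,u). Then the sequence {(E_m, ℓ(V_m))}_{m≥0} is compatible — i.e. for every m ≥ 0 and every u : V_m → ℝ the minimum of E_{m+1}(v,v) over all v : V_{m+1} → ℝ with v|_{V_m} = u is attained and equals E_m(u,u) — if and only if there exists a sequence {(r_m, ρ_m)}_{m≥1} of positive reals with (5/3)r_m + ρ_m = 1 for all m, such that δ_m = r₁⋯r_m for every m ≥ 1 and γ_k = r₁⋯r_{k−1}ρ_k for every k ≥ 1. -/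
/-!
The self-similar structure reduces compatibility to a one-cell electrical network computation.

*Combinatorics.* As `α > 0`, the three maps `G i` send the closed triangle spanned by the `p i` to
pairwise disjoint triangles, and as `α < 1` they are injective. Hence the points
`Gw w (G i (p j))`, for `w` of length `m`, are pairwise distinct: a function on `V (m + 1)` may be
prescribed freely on each cell `Gw w`, and the points with `i = j` are exactly those of `V m`.

*One cell.* With resistances `D` on the edges of the three small triangles and `g` on the three
bridges, the Δ-Y transform shows that the network seen from the outer vertices is a triangle with
resistances `5/3 * D + g`. Concretely, `cell_energy` is the Pythagorean identity splitting the
energy of an extension into that of the harmonic extension `harm` and that of the difference.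

*Conclusion.* Summing over the cells, the minimum of `E (m + 1)` over extensions of `u` is
`QS m u / (5/3 * δ (m + 1) + γ (m + 1))` plus the unchanged bridge terms of levels at most `m`.
With `δ 0` read as `1`, compatibility therefore says `5/3 * δ (m + 1) + γ (m + 1) = δ m` for all
`m`, which is the matching condition for `r m = δ m / δ (m - 1)` and `ρ m = γ m / δ (m - 1)`.
-/

/-! ### Energy of one cell -/

/-- The harmonic extension of boundary values `a` to the vertices of one subdivided cell, with
resistance `D` on the small triangles and `N` the effective resistance `5/3 * D + g`. The index
`(i, j)` stands for the point `G i (p j)`; the diagonal carries the boundary values. -/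
noncomputable def harm (D N : ℝ) (a : Fin 3 → ℝ) (i j : Fin 3) : ℝ :=
  if i = j then a i else a i - D / (3 * N) * (4 * a i - a j - (a 0 + a 1 + a 2))

/-- The energy of a function `b` on the vertices of one subdivided cell, `b i j` being the value
at `G i (p j)`. -/
noncomputable def cellE (D g : ℝ) (b : Fin 3 → Fin 3 → ℝ) : ℝ :=
  1 / D * ∑ i, ((b i 0 - b i 1) ^ 2 + (b i 1 - b i 2) ^ 2 + (b i 2 - b i 0) ^ 2) +
    1 / g * ((b 0 1 - b 1 0) ^ 2 + (b 1 2 - b 2 1) ^ 2 + (b 2 0 - b 0 2) ^ 2)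

/-- The harmonic extension is energy-orthogonal to functions `e` vanishing at the outer vertices,
and its own energy is that of a triangle with resistances `5/3 * D + g`. -/
lemma cell_energy {D g : ℝ} (hD : 0 < D) (hg : 0 < g) (a : Fin 3 → ℝ) (e : Fin 3 → Fin 3 → ℝ)
    (he : ∀ i, e i i = 0) :
    cellE D g (fun i j => harm D (5 / 3 * D + g) a i j + e i j) =
      1 / (5 / 3 * D + g) * ((a 0 - a 1) ^ 2 + (a 1 - a 2) ^ 2 + (a 2 - a 0) ^ 2) +
        cellE D g e := by
  have hN : 5 * D + 3 * g ≠ 0 := by positivity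
  have h3 : 5 / 3 * D + g = (5 * D + 3 * g) / 3 := by ring
  simp only [cellE, harm, Fin.sum_univ_three, he, h3, Fin.isValue, if_true, zero_ne_one,
    one_ne_zero, if_false, show (0 : Fin 3) ≠ 2 by decide, show (2 : Fin 3) ≠ 0 by decide,
    show (1 : Fin 3) ≠ 2 by decide, show (2 : Fin 3) ≠ 1 by decide]
  field_simp
  ring

lemma cellE_nonneg {D g : ℝ} (hD : 0 < D) (hg : 0 < g) (e : Fin 3 → Fin 3 → ℝ) :
    0 ≤ cellE D g e := by
  unfold cellE
  positivity

lemma cell_energy_harm {D g : ℝ} (hD : 0 < D) (hg : 0 < g) (a : Fin 3 → ℝ) :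
    cellE D g (harm D (5 / 3 * D + g) a) =
      1 / (5 / 3 * D + g) * ((a 0 - a 1) ^ 2 + (a 1 - a 2) ^ 2 + (a 2 - a 0) ^ 2) := by
  have h := cell_energy hD hg a (fun _ _ => 0) (fun _ => rfl)
  have h0 : cellE D g (fun _ _ => 0) = 0 := by simp [cellE]
  simpa [h0] using h

lemma cell_energy_le {D g : ℝ} (hD : 0 < D) (hg : 0 < g) (b : Fin 3 → Fin 3 → ℝ) :
    1 / (5 / 3 * D + g) * ((b 0 0 - b 1 1) ^ 2 + (b 1 1 - b 2 2) ^ 2 + (b 2 2 - b 0 0) ^ 2) ≤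
      cellE D g b := by
  have h := cell_energy hD hg (fun i => b i i)
    (fun i j => b i j - harm D (5 / 3 * D + g) (fun i => b i i) i j) (fun i => by simp [harm])
  have h2 := cellE_nonneg hD hg
    (fun i j => b i j - harm D (5 / 3 * D + g) (fun i => b i i) i j)
  simp only [add_sub_cancel] at h
  linarith

/-! ### Words and disjointness of cells -/

lemma sum_words (m : ℕ) (F : List (Fin 3) → ℝ) :
    ∑ w : Fin (m + 1) → Fin 3, F (List.ofFn w) =
      ∑ w : Fin m → Fin 3, ∑ i : Fin 3, F (List.ofFn w ++ [i]) := by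
  rw [← Fintype.sum_prod_type', ← (Fin.snocEquiv fun _ : Fin (m + 1) => Fin 3).sum_comp,
    ← (Equiv.prodComm _ _).sum_comp]
  refine Finset.sum_congr rfl fun x _ => ?_
  simp only [Fin.snocEquiv, Equiv.coe_fn_mk, Equiv.prodComm_apply, Prod.fst_swap, Prod.snd_swap,
    List.ofFn_succ', Fin.snoc_castSucc, Fin.snoc_last, List.concat_eq_append]

section Geometry

variable {p : Fin 3 → EuclideanSpace ℝ (Fin 2)} {α : ℝ}
  {G : Fin 3 → EuclideanSpace ℝ (Fin 2) → EuclideanSpace ℝ (Fin 2)}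
  {Gw : List (Fin 3) → EuclideanSpace ℝ (Fin 2) → EuclideanSpace ℝ (Fin 2)}

/-- The closed triangle with vertices `p i`, as an intersection of three half-planes; this is the
right set for the equilateral triangle of side `1` centred at the origin, where
`inner ℝ (p k) (p j) = -1/6` for `j ≠ k`. -/
def triangle (p : Fin 3 → EuclideanSpace ℝ (Fin 2)) : Set (EuclideanSpace ℝ (Fin 2)) :=
  {x | ∀ k, -(1 / 6) ≤ inner ℝ (p k) x}

lemma inner_p (hp_sum : p 0 + p 1 + p 2 = 0)
    (hp_dist : ∀ i j : Fin 3, i ≠ j → dist (p i) (p j) = 1) (i j : Fin 3) :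
    inner ℝ (p i) (p j) = if i = j then (1 / 3 : ℝ) else -(1 / 6) := by
  have hd : ∀ i j, i ≠ j →
      inner ℝ (p i) (p i) - 2 * inner ℝ (p i) (p j) + inner ℝ (p j) (p j) = (1 : ℝ) := by
    intro i j hij
    have h := hp_dist i j hij
    rw [dist_eq_norm] at h
    rw [real_inner_self_eq_norm_sq, real_inner_self_eq_norm_sq, ← norm_sub_sq_real, h, one_pow]
  have hs : ∀ k, inner ℝ (p k) (p 0) + inner ℝ (p k) (p 1) + inner ℝ (p k) (p 2) = (0 : ℝ) := by
    intro k
    rw [← inner_add_right, ← inner_add_right, hp_sum, inner_zero_right]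
  have h01 := hd 0 1 (by decide)
  have h02 := hd 0 2 (by decide)
  have h12 := hd 1 2 (by decide)
  have s0 := hs 0
  have s1 := hs 1
  have s2 := hs 2
  have c1 := real_inner_comm (p 0) (p 1)
  have c2 := real_inner_comm (p 0) (p 2)
  have c3 := real_inner_comm (p 1) (p 2)
  have e0 := real_inner_self_eq_norm_sq (p 0)
  have e1 := real_inner_self_eq_norm_sq (p 1)
  have e2 := real_inner_self_eq_norm_sq (p 2)
  fin_cases i <;> fin_cases j <;> simp <;> linarith

lemma p_mem (hp_sum : p 0 + p 1 + p 2 = 0)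
    (hp_dist : ∀ i j : Fin 3, i ≠ j → dist (p i) (p j) = 1) (i : Fin 3) : p i ∈ triangle p := by
  intro k
  rw [inner_p hp_sum hp_dist]
  split_ifs <;> norm_num

lemma p_inj (hp_dist : ∀ i j : Fin 3, i ≠ j → dist (p i) (p j) = 1) : Function.Injective p := by
  intro i j h
  by_contra hij
  have := hp_dist i j hij
  rw [h, dist_self] at this
  norm_num at this

lemma inner_G (hG : ∀ i x, G i x = ((1 - α) / 2) • (x - p i) + p i) (k i : Fin 3)
    (x : EuclideanSpace ℝ (Fin 2)) :
    (inner ℝ (p k) (G i x) : ℝ) =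
      (1 - α) / 2 * inner ℝ (p k) x + (1 + α) / 2 * inner ℝ (p k) (p i) := by
  rw [hG, inner_add_right, inner_smul_right, inner_sub_right]
  ring

lemma G_mem (hp_sum : p 0 + p 1 + p 2 = 0)
    (hp_dist : ∀ i j : Fin 3, i ≠ j → dist (p i) (p j) = 1) (hα : α ∈ Set.Ioo (0 : ℝ) 1)
    (hG : ∀ i x, G i x = ((1 - α) / 2) • (x - p i) + p i) (i : Fin 3)
    {x : EuclideanSpace ℝ (Fin 2)} (hx : x ∈ triangle p) : G i x ∈ triangle p := by
  intro k
  rw [inner_G hG]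
  have h1 := hx k
  have h2 := p_mem hp_sum hp_dist i k
  obtain ⟨h3, h4⟩ := hα
  nlinarith [mul_le_mul_of_nonneg_left h1 (by linarith : 0 ≤ (1 - α) / 2),
    mul_le_mul_of_nonneg_left h2 (by linarith : 0 ≤ (1 + α) / 2)]

lemma G_inj (hα : α ∈ Set.Ioo (0 : ℝ) 1)
    (hG : ∀ i x, G i x = ((1 - α) / 2) • (x - p i) + p i) (i : Fin 3) :
    Function.Injective (G i) := by
  intro x y h
  rw [hG, hG] at h
  have hc : (1 - α) / 2 ≠ 0 := by have := hα.2; intro h; linarith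
  exact sub_left_injective (smul_right_injective _ hc (add_right_cancel h))

/-- The three first-level triangles are pairwise disjoint: on the `i`-th one the functional
`inner ℝ (p i)` exceeds `1/12`, while the three functionals sum to zero. -/
lemma G_disj (hp_sum : p 0 + p 1 + p 2 = 0)
    (hp_dist : ∀ i j : Fin 3, i ≠ j → dist (p i) (p j) = 1) (hα : α ∈ Set.Ioo (0 : ℝ) 1)
    (hG : ∀ i x, G i x = ((1 - α) / 2) • (x - p i) + p i) {i j : Fin 3}
    {x y : EuclideanSpace ℝ (Fin 2)} (hx : x ∈ triangle p) (hy : y ∈ triangle p)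
    (h : G i x = G j y) : i = j := by
  by_contra hij
  have key : ∀ (i : Fin 3) (x : EuclideanSpace ℝ (Fin 2)), x ∈ triangle p →
      (1 / 12 : ℝ) < inner ℝ (p i) (G i x) := by
    intro i x hx
    rw [inner_G hG, inner_p hp_sum hp_dist, if_pos rfl]
    obtain ⟨h3, h4⟩ := hα
    nlinarith [mul_le_mul_of_nonneg_left (hx i) (by linarith : 0 ≤ (1 - α) / 2)]
  have h1 := key i x hx
  have h2 := key j y hy
  rw [← h] at h2
  have hT : ∀ k, -(1 / 6 : ℝ) ≤ inner ℝ (p k) (G i x) := G_mem hp_sum hp_dist hα hG i hx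
  have hs : inner ℝ (p 0) (G i x) + inner ℝ (p 1) (G i x) + inner ℝ (p 2) (G i x) = (0 : ℝ) := by
    rw [← inner_add_left, ← inner_add_left, hp_sum, inner_zero_left]
  have t0 := hT 0
  have t1 := hT 1
  have t2 := hT 2
  generalize G i x = z at *
  fin_cases i <;> fin_cases j <;> simp at hij h1 h2 <;> linarith

lemma Gw_append (hGw_nil : ∀ x, Gw [] x = x) (hGw_cons : ∀ i w x, Gw (i :: w) x = G i (Gw w x))
    (l : List (Fin 3)) (i : Fin 3) (x : EuclideanSpace ℝ (Fin 2)) :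
    Gw (l ++ [i]) x = Gw l (G i x) := by
  induction l with
  | nil => simp [hGw_nil, hGw_cons]
  | cons a l ih => simp [hGw_cons, ih]

lemma Gw_mem (hp_sum : p 0 + p 1 + p 2 = 0)
    (hp_dist : ∀ i j : Fin 3, i ≠ j → dist (p i) (p j) = 1) (hα : α ∈ Set.Ioo (0 : ℝ) 1)
    (hG : ∀ i x, G i x = ((1 - α) / 2) • (x - p i) + p i)
    (hGw_nil : ∀ x, Gw [] x = x) (hGw_cons : ∀ i w x, Gw (i :: w) x = G i (Gw w x))
    (l : List (Fin 3)) {x : EuclideanSpace ℝ (Fin 2)} (hx : x ∈ triangle p) :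
    Gw l x ∈ triangle p := by
  induction l with
  | nil => rwa [hGw_nil]
  | cons a l ih => rw [hGw_cons]; exact G_mem hp_sum hp_dist hα hG a ih

/-- Cells of the same level are pairwise disjoint, and each `Gw l` is injective. -/
lemma Gw_inj (hp_sum : p 0 + p 1 + p 2 = 0)
    (hp_dist : ∀ i j : Fin 3, i ≠ j → dist (p i) (p j) = 1) (hα : α ∈ Set.Ioo (0 : ℝ) 1)
    (hG : ∀ i x, G i x = ((1 - α) / 2) • (x - p i) + p i)
    (hGw_nil : ∀ x, Gw [] x = x) (hGw_cons : ∀ i w x, Gw (i :: w) x = G i (Gw w x))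
    (l l' : List (Fin 3)) (hl : l.length = l'.length) {x y : EuclideanSpace ℝ (Fin 2)}
    (hx : x ∈ triangle p) (hy : y ∈ triangle p) (h : Gw l x = Gw l' y) : l = l' ∧ x = y := by
  induction l generalizing l' with
  | nil =>
    cases l' with
    | nil => simpa [hGw_nil] using h
    | cons b l' => simp at hl
  | cons a l ih =>
    cases l' with
    | nil => simp at hl
    | cons b l' =>
      rw [hGw_cons, hGw_cons] at h
      obtain rfl := G_disj hp_sum hp_dist hα hG
        (Gw_mem hp_sum hp_dist hα hG hGw_nil hGw_cons l hx)
        (Gw_mem hp_sum hp_dist hα hG hGw_nil hGw_cons l' hy) h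
      obtain ⟨rfl, rfl⟩ := ih l' (by simpa using hl) (G_inj hα hG a h)
      exact ⟨rfl, rfl⟩

/-- The points `Gw w (G i (p j))` of `V (m + 1)` are pairwise distinct. -/
lemma code_inj (hp_sum : p 0 + p 1 + p 2 = 0)
    (hp_dist : ∀ i j : Fin 3, i ≠ j → dist (p i) (p j) = 1) (hα : α ∈ Set.Ioo (0 : ℝ) 1)
    (hG : ∀ i x, G i x = ((1 - α) / 2) • (x - p i) + p i)
    (hGw_nil : ∀ x, Gw [] x = x) (hGw_cons : ∀ i w x, Gw (i :: w) x = G i (Gw w x)) (m : ℕ) :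
    Function.Injective (fun c : (Fin m → Fin 3) × Fin 3 × Fin 3 =>
      Gw (List.ofFn c.1) (G c.2.1 (p c.2.2))) := by
  rintro ⟨w, i, j⟩ ⟨w', i', j'⟩ h
  have hp := p_mem hp_sum hp_dist
  obtain ⟨h1, h2⟩ := Gw_inj hp_sum hp_dist hα hG hGw_nil hGw_cons _ _ (by simp)
    (G_mem hp_sum hp_dist hα hG i (hp j)) (G_mem hp_sum hp_dist hα hG i' (hp j')) h
  obtain rfl := List.ofFn_injective h1
  obtain rfl := G_disj hp_sum hp_dist hα hG (hp j) (hp j') h2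
  obtain rfl := p_inj hp_dist (G_inj hα hG i h2)
  rfl

end Geometry

/-! ### Matching pairs and compatibility -/

/-- The product formulas for `δ` and `γ` are equivalent to the recursion
`5/3 * δ (m + 1) + γ (m + 1) = δ m`, where `d` is `δ` with its value at `0` set to `1`. -/
lemma matching_iff (δ γ d : ℕ → ℝ) (hδ : ∀ m, 1 ≤ m → 0 < δ m) (hγ : ∀ k, 1 ≤ k → 0 < γ k)
    (hd0 : d 0 = 1) (hd : ∀ m, 1 ≤ m → d m = δ m) :
    (∀ m, 5 / 3 * δ (m + 1) + γ (m + 1) = d m) ↔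
      ∃ r ρ : ℕ → ℝ,
          (∀ m, 1 ≤ m → 0 < r m ∧ 0 < ρ m ∧ (5 / 3) * r m + ρ m = 1) ∧
          (∀ m, 1 ≤ m → δ m = ∏ i ∈ Finset.Icc 1 m, r i) ∧
          (∀ k, 1 ≤ k → γ k = (∏ i ∈ Finset.Icc 1 (k - 1), r i) * ρ k) := by
  have hdpos : ∀ m, 0 < d m := by
    intro m
    rcases Nat.eq_zero_or_pos m with rfl | hm
    · rw [hd0]; exact one_pos
    · rw [hd m hm]; exact hδ m hm
  constructor
  · intro h
    have hprod : ∀ m, ∏ i ∈ Finset.Icc 1 m, δ i / d (i - 1) = d m := by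
      intro m
      induction m with
      | zero => simp [hd0]
      | succ m ih =>
        rw [Finset.prod_Icc_succ_top (by omega), ih, Nat.add_sub_cancel, hd (m + 1) (by omega)]
        field_simp [(hdpos m).ne']
    refine ⟨fun m => δ m / d (m - 1), fun m => γ m / d (m - 1), ?_, ?_, ?_⟩
    · intro m hm
      obtain ⟨m, rfl⟩ := Nat.exists_eq_add_of_le' hm
      refine ⟨div_pos (hδ _ hm) (hdpos _), div_pos (hγ _ hm) (hdpos _), ?_⟩
      have := (hdpos m).ne'
      simp only [Nat.add_sub_cancel]
      rw [mul_div_assoc', ← add_div, h m, div_self this]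
    · intro m hm
      rw [hprod, hd m hm]
    · intro k _
      simp only [hprod]
      field_simp [(hdpos (k - 1)).ne']
  · rintro ⟨r, ρ, h1, h2, h3⟩ m
    have hdm : d m = ∏ i ∈ Finset.Icc 1 m, r i := by
      rcases Nat.eq_zero_or_pos m with rfl | hm
      · simp [hd0]
      · rw [hd m hm, h2 m hm]
    rw [h2 (m + 1) (by omega), h3 (m + 1) (by omega), Finset.prod_Icc_succ_top (by omega),
      Nat.add_sub_cancel, ← hdm]
    linear_combination d m * (h1 (m + 1) (by omega)).2.2


/-- The sequence of forms
`E₀ = Q₀^Σ`, `E_m(u,u) = (1/δ_m)Q_m^Σ(u,u) + Σ_{k=1}^m (1/γ_k)Q_k^I(u,u)` on `ℓ(V_m)`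
is compatible if and only if there is a sequence `{(r_m, ρ_m)}_{m≥1}` of matching pairs
with `δ_m = r₁⋯r_m` and `γ_k = r₁⋯r_{k−1}ρ_k`. -/
theorem compatible_iff_matching_pairs
    (p : Fin 3 → EuclideanSpace ℝ (Fin 2))
    (hp_sum : p 0 + p 1 + p 2 = 0)
    (hp_dist : ∀ i j : Fin 3, i ≠ j → dist (p i) (p j) = 1)
    (α : ℝ) (hα : α ∈ Set.Ioo (0 : ℝ) 1)
    (G : Fin 3 → EuclideanSpace ℝ (Fin 2) → EuclideanSpace ℝ (Fin 2))
    (hG : ∀ i x, G i x = ((1 - α) / 2) • (x - p i) + p i)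
    (Gw : List (Fin 3) → EuclideanSpace ℝ (Fin 2) → EuclideanSpace ℝ (Fin 2))
    (hGw_nil : ∀ x, Gw [] x = x)
    (hGw_cons : ∀ i w x, Gw (i :: w) x = G i (Gw w x))
    (Q0 : (EuclideanSpace ℝ (Fin 2) → ℝ) → ℝ)
    (hQ0 : ∀ u, Q0 u =
      (u (p 0) - u (p 1)) ^ 2 + (u (p 1) - u (p 2)) ^ 2 + (u (p 2) - u (p 0)) ^ 2)
    (Q1I : (EuclideanSpace ℝ (Fin 2) → ℝ) → ℝ)
    (hQ1I : ∀ u, Q1I u =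
      (u (G 0 (p 1)) - u (G 1 (p 0))) ^ 2 + (u (G 1 (p 2)) - u (G 2 (p 1))) ^ 2 +
        (u (G 2 (p 0)) - u (G 0 (p 2))) ^ 2)
    (QS QI : ℕ → (EuclideanSpace ℝ (Fin 2) → ℝ) → ℝ)
    (hQS : ∀ m u, QS m u = ∑ w : Fin m → Fin 3, Q0 (u ∘ Gw (List.ofFn w)))
    (hQI : ∀ m u, QI (m + 1) u = ∑ w : Fin m → Fin 3, Q1I (u ∘ Gw (List.ofFn w)))
    (V : ℕ → Set (EuclideanSpace ℝ (Fin 2)))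
    (hV : ∀ m, V m = {x | ∃ (w : Fin m → Fin 3) (i : Fin 3), x = Gw (List.ofFn w) (p i)})
    (δ γ : ℕ → ℝ) (hδ : ∀ m, 1 ≤ m → 0 < δ m) (hγ : ∀ k, 1 ≤ k → 0 < γ k)
    (E : ℕ → (EuclideanSpace ℝ (Fin 2) → ℝ) → ℝ)
    (hE0 : ∀ u, E 0 u = Q0 u)
    (hEm : ∀ m u, 1 ≤ m →
      E m u = (1 / δ m) * QS m u + ∑ k ∈ Finset.Icc 1 m, (1 / γ k) * QI k u) :
    (∀ (m : ℕ) (u : EuclideanSpace ℝ (Fin 2) → ℝ),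
        IsLeast {x : ℝ | ∃ v : EuclideanSpace ℝ (Fin 2) → ℝ,
          (∀ y ∈ V m, v y = u y) ∧ x = E (m + 1) v} (E m u))
      ↔ ∃ r ρ : ℕ → ℝ,
          (∀ m, 1 ≤ m → 0 < r m ∧ 0 < ρ m ∧ (5 / 3) * r m + ρ m = 1) ∧
          (∀ m, 1 ≤ m → δ m = ∏ i ∈ Finset.Icc 1 m, r i) ∧
          (∀ k, 1 ≤ k → γ k = (∏ i ∈ Finset.Icc 1 (k - 1), r i) * ρ k) := by
  have hp := p_mem hp_sum hp_dist
  have hGp : ∀ i, G i (p i) = p i := by intro i; simp [hG]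
  have happ := Gw_append hGw_nil hGw_cons
  have hmem : ∀ m (w : Fin m → Fin 3) (i j : Fin 3),
      Gw (List.ofFn w) (G i (p j)) ∈ V (m + 1) := by
    intro m w i j
    rw [hV]
    refine ⟨Fin.snoc w i, j, ?_⟩
    rw [List.ofFn_succ', List.concat_eq_append, happ]
    simp
  have hVmono : Monotone V := by
    refine monotone_nat_of_le_succ fun m x hx => ?_
    rw [hV] at hx
    obtain ⟨w, i, rfl⟩ := hx
    simpa [hGp] using hmem m w i i
  -- the bridge terms of levels at most `m` only see the values on `V m`
  have hQIcongr : ∀ m (u v : EuclideanSpace ℝ (Fin 2) → ℝ), (∀ y ∈ V m, v y = u y) →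
      ∑ k ∈ Finset.Icc 1 m, (1 / γ k) * QI k v = ∑ k ∈ Finset.Icc 1 m, (1 / γ k) * QI k u := by
    intro m u v huv
    refine Finset.sum_congr rfl fun k hk => ?_
    obtain ⟨hk1, hkm⟩ := Finset.mem_Icc.1 hk
    obtain ⟨k, rfl⟩ := Nat.exists_eq_add_of_le' hk1
    have hv : ∀ (w : Fin k → Fin 3) (i j : Fin 3),
        v (Gw (List.ofFn w) (G i (p j))) = u (Gw (List.ofFn w) (G i (p j))) :=
      fun w i j => huv _ (hVmono hkm (hmem k w i j))
    simp only [hQI, hQ1I, Function.comp_apply, hv]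
  have hEsucc : ∀ m (v : EuclideanSpace ℝ (Fin 2) → ℝ),
      E (m + 1) v = ∑ w : Fin m → Fin 3, cellE (δ (m + 1)) (γ (m + 1))
          (fun i j => v (Gw (List.ofFn w) (G i (p j)))) +
        ∑ k ∈ Finset.Icc 1 m, (1 / γ k) * QI k v := by
    intro m v
    rw [hEm (m + 1) v (by omega), Finset.sum_Icc_succ_top (by omega), hQI, hQS,
      sum_words m (fun l => Q0 (v ∘ Gw l))]
    simp only [cellE]
    rw [Finset.sum_add_distrib, ← Finset.mul_sum, ← Finset.mul_sum]
    simp only [hQ0, hQ1I, Function.comp_apply, happ]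
    ring
  have hleast : ∀ m (u : EuclideanSpace ℝ (Fin 2) → ℝ),
      IsLeast {x : ℝ | ∃ v : EuclideanSpace ℝ (Fin 2) → ℝ,
          (∀ y ∈ V m, v y = u y) ∧ x = E (m + 1) v}
        (1 / (5 / 3 * δ (m + 1) + γ (m + 1)) * QS m u +
          ∑ k ∈ Finset.Icc 1 m, (1 / γ k) * QI k u) := by
    intro m u
    have hD := hδ (m + 1) (by omega)
    have hg := hγ (m + 1) (by omega)
    have hcode := code_inj hp_sum hp_dist hα hG hGw_nil hGw_cons m
    constructor
    · -- glue the harmonic extensions of all cells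
      set H : (Fin m → Fin 3) × Fin 3 × Fin 3 → ℝ := fun c =>
        harm (δ (m + 1)) (5 / 3 * δ (m + 1) + γ (m + 1))
          (fun i => u (Gw (List.ofFn c.1) (p i))) c.2.1 c.2.2 with hH
      set v : EuclideanSpace ℝ (Fin 2) → ℝ :=
        Function.extend (fun c : (Fin m → Fin 3) × Fin 3 × Fin 3 =>
          Gw (List.ofFn c.1) (G c.2.1 (p c.2.2))) H 0 with hv
      have hvH : ∀ w i j, v (Gw (List.ofFn w) (G i (p j))) = H (w, i, j) :=
        fun w i j => hcode.extend_apply H 0 (w, i, j)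
      have hvu : ∀ y ∈ V m, v y = u y := by
        intro y hy
        rw [hV] at hy
        obtain ⟨w, i, rfl⟩ := hy
        have := hvH w i i
        rw [hGp] at this
        rw [this]
        simp [hH, harm]
      refine ⟨v, hvu, ?_⟩
      rw [hEsucc, hQIcongr m u v hvu, hQS, Finset.mul_sum]
      congr 1
      refine Finset.sum_congr rfl fun w _ => ?_
      simp only [hvH, hQ0, Function.comp_apply]
      exact (cell_energy_harm hD hg fun i => u (Gw (List.ofFn w) (p i))).symm
    · rintro _ ⟨v, hvu, rfl⟩
      rw [hEsucc, hQIcongr m u v hvu, hQS, Finset.mul_sum]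
      gcongr with w _
      have h := cell_energy_le hD hg (fun i j => v (Gw (List.ofFn w) (G i (p j))))
      have hvu' : ∀ i, v (Gw (List.ofFn w) (p i)) = u (Gw (List.ofFn w) (p i)) := by
        intro i
        apply hvu
        rw [hV]
        exact ⟨w, i, rfl⟩
      simp only [hGp, hvu'] at h
      simpa only [hQ0, Function.comp_apply] using h
  set d : ℕ → ℝ := fun m => if m = 0 then 1 else δ m with hd
  have hEd : ∀ m u, E m u = 1 / d m * QS m u + ∑ k ∈ Finset.Icc 1 m, (1 / γ k) * QI k u := by
    intro m u
    rcases Nat.eq_zero_or_pos m with rfl | hm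
    · rw [hE0, hQS]
      have : (Gw []) = id := funext hGw_nil
      simp [hd, this]
    · rw [hEm m u hm]
      simp [hd, hm.ne']
  rw [← matching_iff δ γ d hδ hγ (by simp [hd]) (fun m hm => by simp [hd]; omega)]
  refine forall_congr' fun m => ⟨fun h => ?_, fun h u => ?_⟩
  · -- test against the indicator of one vertex of `V m`, for which `QS m` does not vanish
    classical
    set w₀ : Fin m → Fin 3 := fun _ => 0
    set u : EuclideanSpace ℝ (Fin 2) → ℝ :=
      fun x => if x = Gw (List.ofFn w₀) (p 0) then 1 else 0 with hu
    have hne : Gw (List.ofFn w₀) (p 1) ≠ Gw (List.ofFn w₀) (p 0) := fun h01 => by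
      have := (Gw_inj hp_sum hp_dist hα hG hGw_nil hGw_cons _ _ rfl (hp 1) (hp 0) h01).2
      exact absurd (p_inj hp_dist this) (by decide)
    have hpos : 0 < QS m u := by
      rw [hQS]
      refine Finset.sum_pos' (fun w _ => by rw [hQ0]; positivity) ⟨w₀, Finset.mem_univ _, ?_⟩
      rw [hQ0]
      have h1 : (u ∘ Gw (List.ofFn w₀)) (p 0) = 1 := by simp [hu]
      have h2 : (u ∘ Gw (List.ofFn w₀)) (p 1) = 0 := by simp [hu, hne]
      rw [h1, h2]
      positivity
    have heq := (hleast m u).unique (h u)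
    rw [hEd, add_left_inj] at heq
    have := mul_right_cancel₀ hpos.ne' heq
    simpa using this
  · rw [hEd, ← h]
    exact hleast m u
end

section
/- Let ρ₀ ∈ (0,1] and let {ρ_m}_{m≥1}, {σ_m}_{m≥1} be sequences in (0,1) satisfying ρ_m·Π_{i=1}^{m−1}(1 − ρ_i) = ρ₀·σ_m·Π_{i=1}^{m−1}(1 − σ_i) for every m ≥ 1. Then for every m ≥ 1: ρ₀·Π_{i=1}^{m−1}(1 − σ_i) = Π_{i=1}^{m−1}(1 − ρ_i) − (1 − ρ₀); consequently σ_m = [Π_{i=1}^{m−1}(1 − ρ_i)] / [Π_{i=1}^{m−1}(1 − ρ_i) − (1 − ρ₀)] · ρ_m and ρ_m = [ρ₀·Π_{i=1}^{m−1}(1 − σ_i)] / [ρ₀·Π_{i=1}^{m−1}(1 − σ_i) + (1 − ρ₀)] · σ_m. -/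
/-- If ρ₀ ∈ (0,1] and `{ρ_m}, {σ_m} ⊆ (0,1)` (indexed so that `ρ m`
stands for `ρ_{m+1}`) satisfy `ρ_m Π_{i<m}(1−ρ_i) = ρ₀ σ_m Π_{i<m}(1−σ_i)` for all m,
then `ρ₀ Π_{i<m}(1−σ_i) = Π_{i<m}(1−ρ_i) − (1−ρ₀)`, and consequently the expressions
of σ_m in terms of ρ_m and vice versa hold. -/
theorem projection_resistance_identities
    (ρ₀ : ℝ) (hρ₀ : ρ₀ ∈ Set.Ioc (0 : ℝ) 1)
    (ρ σ : ℕ → ℝ)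
    (hρ : ∀ m, ρ m ∈ Set.Ioo (0 : ℝ) 1) (hσ : ∀ m, σ m ∈ Set.Ioo (0 : ℝ) 1)
    (hrel : ∀ m, ρ m * ∏ i ∈ Finset.range m, (1 - ρ i) =
      ρ₀ * σ m * ∏ i ∈ Finset.range m, (1 - σ i)) :
    ∀ m : ℕ,
      ρ₀ * ∏ i ∈ Finset.range m, (1 - σ i) =
        (∏ i ∈ Finset.range m, (1 - ρ i)) - (1 - ρ₀) ∧
      σ m = (∏ i ∈ Finset.range m, (1 - ρ i)) /
        ((∏ i ∈ Finset.range m, (1 - ρ i)) - (1 - ρ₀)) * ρ m ∧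
      ρ m = (ρ₀ * ∏ i ∈ Finset.range m, (1 - σ i)) /
        (ρ₀ * (∏ i ∈ Finset.range m, (1 - σ i)) + (1 - ρ₀)) * σ m := by
  -- The hypothesis says that passing from `m` to `m + 1` lowers both sides by the same amount.
  have key : ∀ m : ℕ, ρ₀ * ∏ i ∈ Finset.range m, (1 - σ i) =
      (∏ i ∈ Finset.range m, (1 - ρ i)) - (1 - ρ₀) := by
    intro m
    induction m with
    | zero => simp
    | succ k ih =>
      rw [Finset.prod_range_succ, Finset.prod_range_succ]
      linear_combination ih + hrel k
  intro m
  have hP : 0 < ∏ i ∈ Finset.range m, (1 - ρ i) :=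
    Finset.prod_pos fun i _ => sub_pos.2 (hρ i).2
  have hQ : 0 < ρ₀ * ∏ i ∈ Finset.range m, (1 - σ i) :=
    mul_pos hρ₀.1 (Finset.prod_pos fun i _ => sub_pos.2 (hσ i).2)
  refine ⟨key m, ?_, ?_⟩
  · rw [← key m, div_mul_eq_mul_div, eq_div_iff hQ.ne']
    linear_combination -hrel m
  · have hden : ρ₀ * (∏ i ∈ Finset.range m, (1 - σ i)) + (1 - ρ₀) =
        ∏ i ∈ Finset.range m, (1 - ρ i) := by
      linear_combination key m
    rw [hden, div_mul_eq_mul_div, eq_div_iff hP.ne']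
    linear_combination hrel m
end

section
/- Let ρ₀ ∈ (0,1] and let {ρ_m}_{m≥1}, {σ_m}_{m≥1} be sequences in (0,1) satisfying ρ_m·Π_{i=1}^{m−1}(1 − ρ_i) = ρ₀·σ_m·Π_{i=1}^{m−1}(1 − σ_i) for every m ≥ 1, and set α_m = 1 − Π_{i=1}^{m−1}(1 − ρ_i). Then for every m ≥ 1 one has ρ₀ > α_m and σ_m = ((1 − α_m)/(ρ₀ − α_m))·ρ_m; in particular ρ₀ ≥ lim_{m→∞} α_m. -/
/-!
Write `P m = ∏_{i<m} (1 - ρ i)` and `Q m = ∏_{i<m} (1 - σ i)`. Since `ρ m * P m = P m - P (m+1)` and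
`σ m * Q m = Q m - Q (m+1)`, the relation between `ρ` and `σ` says that `P` and `ρ₀ * Q` have the
same increments. Telescoping gives `1 - P m = ρ₀ * (1 - Q m)`, that is `ρ₀ - A m = ρ₀ * Q m`, which
is positive. The formula for `σ m` is then the relation divided by `ρ₀ * Q m`, and the bound on the
limit holds because `A` is monotone and bounded above by `ρ₀`.
-/

/-- With ρ₀ ∈ (0,1], `{ρ_m}, {σ_m} ⊆ (0,1)` (indexed so that `ρ m`
stands for `ρ_{m+1}`) satisfying `ρ_m Π_{i<m}(1−ρ_i) = ρ₀ σ_m Π_{i<m}(1−σ_i)`, and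
`α_m = 1 − Π_{i<m}(1−ρ_i)`: for every m, `ρ₀ > α_m` and
`σ_m = ((1 − α_m)/(ρ₀ − α_m)) ρ_m`; in particular `ρ₀ ≥ lim α_m`. -/
theorem projection_resistance_ratio
    (ρ₀ : ℝ) (hρ₀ : ρ₀ ∈ Set.Ioc (0 : ℝ) 1)
    (ρ σ : ℕ → ℝ)
    (hρ : ∀ m, ρ m ∈ Set.Ioo (0 : ℝ) 1) (hσ : ∀ m, σ m ∈ Set.Ioo (0 : ℝ) 1)
    (hrel : ∀ m, ρ m * ∏ i ∈ Finset.range m, (1 - ρ i) =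
      ρ₀ * σ m * ∏ i ∈ Finset.range m, (1 - σ i))
    (A : ℕ → ℝ) (hA : ∀ m, A m = 1 - ∏ i ∈ Finset.range m, (1 - ρ i)) :
    (∀ m : ℕ, A m < ρ₀ ∧ σ m = ((1 - A m) / (ρ₀ - A m)) * ρ m) ∧
    ∃ L : ℝ, Filter.Tendsto A Filter.atTop (nhds L) ∧ L ≤ ρ₀ := by
  have hQ : ∀ m, 0 < ∏ i ∈ Finset.range m, (1 - σ i) := fun m =>
    Finset.prod_pos fun i _ => sub_pos.2 (hσ i).2
  have hP : ∀ m, 0 < ∏ i ∈ Finset.range m, (1 - ρ i) := fun m =>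
    Finset.prod_pos fun i _ => sub_pos.2 (hρ i).2
  have key : ∀ m, ρ₀ - A m = ρ₀ * ∏ i ∈ Finset.range m, (1 - σ i) := by
    intro m
    rw [hA]
    induction m with
    | zero => simp
    | succ k ih =>
      rw [Finset.prod_range_succ, Finset.prod_range_succ]
      linear_combination ih - hrel k
  have hpos : ∀ m, 0 < ρ₀ - A m := fun m => by
    rw [key]
    exact mul_pos hρ₀.1 (hQ m)
  refine ⟨fun m => ⟨sub_pos.1 (hpos m), ?_⟩, ?_⟩
  · rw [div_mul_eq_mul_div, eq_div_iff (hpos m).ne', key, hA]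
    linear_combination -hrel m
  · have hmono : Monotone A := monotone_nat_of_le_succ fun n => by
      rw [hA, hA, Finset.prod_range_succ]
      nlinarith [mul_pos (hP n) (hρ n).1]
    have hle : ∀ m, A m ≤ ρ₀ := fun m => (sub_pos.1 (hpos m)).le
    exact ⟨⨆ m, A m, tendsto_atTop_ciSup hmono ⟨ρ₀, Set.forall_mem_range.2 hle⟩, ciSup_le hle⟩
end

section
/- Let α ∈ (0,1) and R = {(r_m, ρ_m)}_{m≥1} ∈ MP^ℕ, and for n ≥ 0 let R⁽ⁿ⁾ = {(r_{n+m}, ρ_{n+m})}_{m≥1} be the shifted sequence. Then for all m ≥ 1, n ≥ 1 and every u : V_{n+m} → ℝ, E_{R,n+m}(u,u) = (1/δ_m)·Σ_{w∈W_m} E_{R⁽ᵐ⁾,n}(u∘G_w, u∘G_w) + Σ_{k=1}^m (1/γ_k)·Q_k^I(u,u), where u∘G_w is viewed as a function on V_n (since G_w maps V_n into V_{n+m}). -/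
/-!
Words concatenate, and correspondingly the maps compose: `G_{w v} = G_w ∘ G_v`. Hence a sum over
`W_{m+n}` splits as a double sum over `W_m × W_n` (`sum_words_add`), which gives
`Q_{m+n}^Σ(u,u) = Σ_{w ∈ W_m} Q_n^Σ(u ∘ G_w, u ∘ G_w)`, and likewise for `Q_{m+k}^I` with `k ≥ 1`.
The products defining `δ` and `γ` factor through the first `m` terms of the sequence, so the level-`n`
weights of the shifted sequence, multiplied by `1/δ_m`, are the level-`(m+n)` weights of the
original one. Splitting the sum over the levels at `m` gives the identity.
-/

/-- A sum over words of length `m + n` of a functional of `u ∘ G_w` is an iterated sum over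
prefixes of length `m` and suffixes of length `n`. -/
lemma sum_words_add {ι X : Type*} [Fintype ι] (g : List ι → X → X)
    (happ : ∀ w v x, g (w ++ v) x = g w (g v x))
    (F : (X → ℝ) → ℝ) (m n : ℕ) (u : X → ℝ) :
    ∑ w : Fin (m + n) → ι, F (u ∘ g (List.ofFn w)) =
      ∑ w : Fin m → ι, ∑ v : Fin n → ι, F ((u ∘ g (List.ofFn w)) ∘ g (List.ofFn v)) := by
  rw [← Fintype.sum_prod_type', ← (Fin.appendEquiv m n).sum_comp]
  refine Finset.sum_congr rfl fun x _ => ?_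
  congr 1
  funext y
  simp [Fin.appendEquiv, List.ofFn_fin_append, happ]

/-- Self-similarity of the approximating forms: for R ∈ MP^ℕ (indexed
so that `r k` stands for `r_{k+1}`) and all m, n ≥ 1,
`E_{R,n+m}(u,u) = (1/δ_m) Σ_{w∈W_m} E_{R⁽ᵐ⁾,n}(u∘G_w, u∘G_w) + Σ_{k=1}^m (1/γ_k) Q_k^I(u,u)`. -/
theorem approximating_form_self_similarity
    (p : Fin 3 → EuclideanSpace ℝ (Fin 2))
    (hp_sum : p 0 + p 1 + p 2 = 0)
    (hp_dist : ∀ i j : Fin 3, i ≠ j → dist (p i) (p j) = 1)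
    (α : ℝ) (hα : α ∈ Set.Ioo (0 : ℝ) 1)
    (G : Fin 3 → EuclideanSpace ℝ (Fin 2) → EuclideanSpace ℝ (Fin 2))
    (hG : ∀ i x, G i x = ((1 - α) / 2) • (x - p i) + p i)
    (Gw : List (Fin 3) → EuclideanSpace ℝ (Fin 2) → EuclideanSpace ℝ (Fin 2))
    (hGw_nil : ∀ x, Gw [] x = x)
    (hGw_cons : ∀ i w x, Gw (i :: w) x = G i (Gw w x))
    (Q0 : (EuclideanSpace ℝ (Fin 2) → ℝ) → ℝ)
    (hQ0 : ∀ u, Q0 u =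
      (u (p 0) - u (p 1)) ^ 2 + (u (p 1) - u (p 2)) ^ 2 + (u (p 2) - u (p 0)) ^ 2)
    (Q1I : (EuclideanSpace ℝ (Fin 2) → ℝ) → ℝ)
    (hQ1I : ∀ u, Q1I u =
      (u (G 0 (p 1)) - u (G 1 (p 0))) ^ 2 + (u (G 1 (p 2)) - u (G 2 (p 1))) ^ 2 +
        (u (G 2 (p 0)) - u (G 0 (p 2))) ^ 2)
    (QS QI : ℕ → (EuclideanSpace ℝ (Fin 2) → ℝ) → ℝ)
    (hQS : ∀ m u, QS m u = ∑ w : Fin m → Fin 3, Q0 (u ∘ Gw (List.ofFn w)))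
    (hQI : ∀ m u, QI (m + 1) u = ∑ w : Fin m → Fin 3, Q1I (u ∘ Gw (List.ofFn w)))
    (r ρ : ℕ → ℝ)
    (hmatch : ∀ m, 0 < r m ∧ 0 < ρ m ∧ (5 / 3) * r m + ρ m = 1)
    -- `ER r' ρ' m u` is the form `E_{R',m}(u,u)` associated with the sequence of
    -- matching pairs R' = {(r'_k, ρ'_k)}
    (ER : (ℕ → ℝ) → (ℕ → ℝ) → ℕ → (EuclideanSpace ℝ (Fin 2) → ℝ) → ℝ)
    (hER : ∀ (r' ρ' : ℕ → ℝ) (m : ℕ) (u : EuclideanSpace ℝ (Fin 2) → ℝ),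
      ER r' ρ' m u = (∏ i ∈ Finset.range m, r' i)⁻¹ * QS m u +
        ∑ k ∈ Finset.range m, ((∏ i ∈ Finset.range k, r' i) * ρ' k)⁻¹ * QI (k + 1) u) :
    ∀ m n : ℕ, 1 ≤ m → 1 ≤ n → ∀ u : EuclideanSpace ℝ (Fin 2) → ℝ,
      ER r ρ (n + m) u =
        (∏ i ∈ Finset.range m, r i)⁻¹ *
            ∑ w : Fin m → Fin 3,
              ER (fun k => r (m + k)) (fun k => ρ (m + k)) n (u ∘ Gw (List.ofFn w)) +
          ∑ k ∈ Finset.range m,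
            ((∏ i ∈ Finset.range k, r i) * ρ k)⁻¹ * QI (k + 1) u := by
  intro m n _ _ u
  have happ : ∀ w v x, Gw (w ++ v) x = Gw w (Gw v x) := by
    intro w v x
    induction w with
    | nil => simp [hGw_nil]
    | cons i w ih => simp [hGw_cons, ih]
  have hS : QS (m + n) u = ∑ w : Fin m → Fin 3, QS n (u ∘ Gw (List.ofFn w)) := by
    simp only [hQS]
    exact sum_words_add Gw happ Q0 m n u
  have hI : ∀ k, QI (m + k + 1) u =
      ∑ w : Fin m → Fin 3, QI (k + 1) (u ∘ Gw (List.ofFn w)) := by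
    intro k
    simp only [hQI]
    exact sum_words_add Gw happ Q1I m k u
  have hsum : ∑ w : Fin m → Fin 3,
      ER (fun k => r (m + k)) (fun k => ρ (m + k)) n (u ∘ Gw (List.ofFn w)) =
      (∏ i ∈ Finset.range n, r (m + i))⁻¹ * QS (m + n) u +
        ∑ k ∈ Finset.range n,
          ((∏ i ∈ Finset.range k, r (m + i)) * ρ (m + k))⁻¹ * QI (m + k + 1) u := by
    simp only [hER, Finset.sum_add_distrib, hS, hI, Finset.mul_sum]
    rw [Finset.sum_comm (s := Finset.range n)]
  rw [add_comm n m, hER, hsum, Finset.sum_range_add, Finset.prod_range_add, mul_add,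
    Finset.mul_sum]
  simp only [Finset.prod_range_add, mul_inv, mul_assoc]
  ring
end
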